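/- arXiv:1411.0363 — 6 statements merged into one kernel-verified Lean document; each statement's English description precedes it below -/
import Mathlib

section
/- If V ⊆ ℂⁿ is an analytic polyhedron then V is an open set of holomorphy, i.e., every connected component of V is a domain of holomorphy. -/
open Set Metric Filter Topology

/-- A function `f`, holomorphic on the open set `U ⊆ ℂⁿ`, extends holomorphically to a point
`a`: there is a connected open neighbourhood `V` of `a` and a holomorphic `g` on `V` agreeing
with `f` on a nonempty open subset of `U ∩ V`. -/
def ExtendsHolomorphicallyTo {n : ℕ} (U : Set (Fin n → ℂ)) (f : (Fin n → ℂ) → ℂ)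
    (a : Fin n → ℂ) : Prop :=
  ∃ V : Set (Fin n → ℂ), IsOpen V ∧ IsConnected V ∧ a ∈ V ∧
    ∃ g : (Fin n → ℂ) → ℂ, DifferentiableOn ℂ g V ∧
      ∃ W : Set (Fin n → ℂ), IsOpen W ∧ W.Nonempty ∧ W ⊆ U ∩ V ∧ Set.EqOn f g W

/-- `U ⊆ ℂⁿ` is a domain of holomorphy: it is a domain (connected open set) and there exists a
holomorphic function on `U` which does not extend holomorphically to any point of `Uᶜ`. -/
def IsDomainOfHolomorphy {n : ℕ} (U : Set (Fin n → ℂ)) : Prop :=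
  IsOpen U ∧ IsConnected U ∧
    ∃ f : (Fin n → ℂ) → ℂ, DifferentiableOn ℂ f U ∧
      ∀ a ∈ Uᶜ, ¬ ExtendsHolomorphicallyTo U f a


/-- A holomorphic function on the unit disc whose minimum modulus on suitable circles
tending to the boundary is unbounded. -/
lemma exists_wild : ∃ h : ℂ → ℂ, DifferentiableOn ℂ h (ball 0 1) ∧
    ∀ M r : ℝ, r < 1 → ∃ s, r < s ∧ s < 1 ∧ ∀ z : ℂ, ‖z‖ = s → M < ‖h z‖ := by
  let N : ℕ → ℕ := fun k => 8 ^ (k ^ 2)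
  have hN : ∀ k, 0 < N k := fun k => by positivity
  let ρ : ℕ → ℝ := fun k => (1 / 2 : ℝ) ^ ((N k : ℝ)⁻¹)
  have hρ0 : ∀ k, 0 < ρ k := fun k => by positivity
  have hρ1 : ∀ k, ρ k < 1 := fun k =>
    Real.rpow_lt_one (by norm_num) (by norm_num) (by have := hN k; positivity)
  have hρN : ∀ k, ρ k ^ N k = 1 / 2 := fun k =>
    Real.rpow_inv_natCast_pow (by norm_num) (hN k).ne'
  have hNt : Tendsto (fun k => ((N k : ℝ))⁻¹) atTop (𝓝 0) := by
    apply tendsto_inv_atTop_zero.comp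
    apply tendsto_natCast_atTop_atTop.comp
    refine tendsto_atTop_mono (fun k => ?_) tendsto_id
    have h1 : k < 8 ^ k := Nat.lt_pow_self (by norm_num)
    have h2 : 8 ^ k ≤ 8 ^ (k ^ 2) := Nat.pow_le_pow_right (by norm_num) (by nlinarith [Nat.le_self_pow (n := 2) (by norm_num) k])
    exact (h1.trans_le h2).le
  have hρt : Tendsto ρ atTop (𝓝 1) := by
    have h0 : Tendsto (fun x : ℝ => (1 / 2 : ℝ) ^ x) (𝓝 0) (𝓝 1) := by
      have := (Real.continuous_const_rpow (a := (1 / 2 : ℝ)) (by norm_num)).tendsto 0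
      simpa using this
    exact h0.comp hNt
  -- tail bound
  have htail : ∀ j k, j < k → (4 : ℝ) ^ k * ρ j ^ N k ≤ (1 / 2) ^ k := by
    intro j k hjk
    have e1 : k ^ 2 = j ^ 2 + (k ^ 2 - j ^ 2) := by
      have : j ^ 2 ≤ k ^ 2 := Nat.pow_le_pow_left hjk.le 2
      omega
    have e2 : k ≤ k ^ 2 - j ^ 2 := by
      apply Nat.le_sub_of_add_le
      nlinarith
    have e3 : N k = N j * 8 ^ (k ^ 2 - j ^ 2) := by
      show 8 ^ (k ^ 2) = 8 ^ (j ^ 2) * 8 ^ (k ^ 2 - j ^ 2)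
      rw [← pow_add, ← e1]
    have e4 : 3 * k ≤ 8 ^ (k ^ 2 - j ^ 2) := by
      have h1 : 8 ^ k ≤ 8 ^ (k ^ 2 - j ^ 2) := Nat.pow_le_pow_right (by norm_num) e2
      have h2 : 3 * k ≤ 8 ^ k := by
        clear * -
        induction k with
        | zero => simp
        | succ k ih =>
          have := Nat.one_le_pow k 8 (by norm_num)
          rw [pow_succ]; omega
      exact h2.trans h1
    have e5 : ρ j ^ N k ≤ (1 / 2) ^ (3 * k) := by
      rw [e3, pow_mul, hρN]
      exact pow_le_pow_of_le_one (by norm_num) (by norm_num) e4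
    calc (4 : ℝ) ^ k * ρ j ^ N k ≤ 4 ^ k * (1 / 2) ^ (3 * k) := by gcongr
      _ = (1 / 2) ^ k := by rw [pow_mul, ← mul_pow]; norm_num
  have hsum : ∀ j, Summable (fun k => (4 : ℝ) ^ k * ρ j ^ N k) := by
    intro j
    rw [← summable_nat_add_iff (j + 1)]
    refine Summable.of_nonneg_of_le (fun k => ?_) (fun k => htail j (k + (j + 1)) (by omega)) ?_
    · have := hρ0 j; positivity
    · exact (summable_nat_add_iff (j + 1)).2 (summable_geometric_of_lt_one (by norm_num) (by norm_num))
  let F : ℕ → ℂ → ℂ := fun k z => 4 ^ k * z ^ N k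
  have hFn : ∀ k z, ‖F k z‖ = 4 ^ k * ‖z‖ ^ N k := by
    intro k z; simp [F]
  have hFle : ∀ j k z, ‖z‖ ≤ ρ j → ‖F k z‖ ≤ 4 ^ k * ρ j ^ N k := by
    intro j k z hz; rw [hFn]; gcongr
  refine ⟨fun z => ∑' k, F k z, ?_, ?_⟩
  · intro z hz
    have hz' : ‖z‖ < 1 := by simpa using hz
    obtain ⟨j, hj⟩ := (hρt.eventually (lt_mem_nhds hz')).exists
    have hd : DifferentiableOn ℂ (fun z => ∑' k, F k z) (ball 0 (ρ j)) := by
      refine Complex.differentiableOn_tsum_of_summable_norm (hsum j) (fun k => ?_) isOpen_ball ?_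
      · exact fun z _ => by simp only [F]; fun_prop
      · intro k w hw
        exact hFle j k w (by simpa using (mem_ball_zero_iff.1 hw).le)
    exact (hd.differentiableAt (isOpen_ball.mem_nhds (by simpa using hj))).differentiableWithinAt
  · intro M r hr
    have hb : ∀ k z, ‖z‖ = ρ k → (4 : ℝ) ^ k / 6 - 2 ≤ ‖∑' k, F k z‖ := by
      intro k z hz
      have hs : Summable (fun i => F i z) :=
        Summable.of_norm_bounded (hsum k) (fun i => hFle k i z hz.le)
      rw [← hs.sum_add_tsum_nat_add (k + 1), Finset.sum_range_succ]
      have h1 : ‖∑ i ∈ Finset.range k, F i z‖ ≤ 4 ^ k / 3 := by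
        calc _ ≤ ∑ i ∈ Finset.range k, (4 : ℝ) ^ i := by
              refine norm_sum_le_of_le _ (fun i _ => ?_)
              rw [hFn]
              have : ‖z‖ ^ N i ≤ 1 := pow_le_one₀ (norm_nonneg _) (hz.le.trans (hρ1 k).le)
              exact mul_le_of_le_one_right (by positivity) this
          _ ≤ 4 ^ k / 3 := by
              rw [geom_sum_eq (by norm_num)]
              norm_num
              linarith
      have h2 : ‖F k z‖ = 4 ^ k / 2 := by
        rw [hFn, hz, hρN]; ring
      have h3 : ‖∑' i, F (i + (k + 1)) z‖ ≤ 2 := by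
        refine tsum_of_norm_bounded (hasSum_geometric_two) (fun i => ?_)
        refine (hFle k _ z hz.le).trans ((htail k _ (by omega)).trans ?_)
        exact pow_le_pow_of_le_one (by norm_num) (by norm_num) (by omega)
      set A := ∑ i ∈ Finset.range k, F i z
      set B := ∑' i, F (i + (k + 1)) z
      have h4 : ‖F k z‖ ≤ ‖A + F k z + B‖ + ‖A‖ + ‖B‖ := by
        have : F k z = (A + F k z + B) - A - B := by ring
        calc ‖F k z‖ = ‖(A + F k z + B) - A - B‖ := by rw [← this]
          _ ≤ ‖(A + F k z + B) - A‖ + ‖B‖ := norm_sub_le _ _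
          _ ≤ _ := by gcongr; exact norm_sub_le _ _
      linarith
    have ht : Tendsto (fun k : ℕ => (4 : ℝ) ^ k) atTop atTop :=
      tendsto_pow_atTop_atTop_of_one_lt (by norm_num)
    obtain ⟨k, hk1, hk2⟩ := ((hρt.eventually (lt_mem_nhds hr)).and
      (ht.eventually_gt_atTop (6 * (M + 2)))).exists
    refine ⟨ρ k, hk1, hρ1 k, fun z hz => ?_⟩
    have := hb k z hz
    linarith

/-- A vector space of finite dimension is not a countable union of proper subspaces. -/
lemma exists_not_mem_submodules {m : ℕ} {ι : Type*} [Countable ι]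
    (S : ι → Submodule ℂ (Fin m → ℂ)) (hS : ∀ i, S i ≠ ⊤) : ∃ c, ∀ i, c ∉ S i := by
  by_contra! hcon
  obtain ⟨i, hi⟩ := nonempty_interior_of_iUnion_of_closed (f := fun i => (S i : Set (Fin m → ℂ)))
    (fun i => (S i).closed_of_finiteDimensional) (by
      ext c; simpa using hcon c)
  exact hS i (Submodule.eq_top_of_nonempty_interior' _ hi)

/-- If `D` is open and a connected open `V` meets `D` at `w` and leaves `D`, then the component of
`D ∩ V` through `w` has a boundary point in `V \ D`. -/
lemma exists_boundary {n : ℕ} {D V : Set (Fin n → ℂ)} (hD : IsOpen D) (hV : IsOpen V)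
    (hVc : IsConnected V) {a w : Fin n → ℂ} (ha : a ∈ V) (haD : a ∉ D) (hw : w ∈ D ∩ V) :
    ∃ b ∈ V, b ∉ D ∧ b ∈ closure (connectedComponentIn (D ∩ V) w) := by
  set C := connectedComponentIn (D ∩ V) w with hC
  have hCo : IsOpen C := (hD.inter hV).connectedComponentIn
  by_contra! hcon
  have hsub : V ⊆ C := by
    refine hVc.isPreconnected.subset_of_closure_inter_subset hCo
      ⟨w, hw.2, mem_connectedComponentIn hw⟩ ?_
    rintro b ⟨hb, hbV⟩
    have hbD : b ∈ D := by
      by_contra h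
      exact hcon b hbV h hb
    have hbo : IsOpen (connectedComponentIn (D ∩ V) b) := (hD.inter hV).connectedComponentIn
    obtain ⟨y, hy1, hy2⟩ := mem_closure_iff.1 hb _ hbo (mem_connectedComponentIn ⟨hbD, hbV⟩)
    have e1 := connectedComponentIn_eq hy1
    have e2 := connectedComponentIn_eq hy2
    rw [hC, e2, ← e1]
    exact mem_connectedComponentIn ⟨hbD, hbV⟩
  exact haD (connectedComponentIn_subset _ _ (hsub ha)).1

/-- Identity theorem for complex differentiable functions on `ℂⁿ`, for open preconnected sets. -/
lemma identity_Cn {n : ℕ} {C : Set (Fin n → ℂ)} (hC : IsOpen C) (hCc : IsPreconnected C)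
    {f g : (Fin n → ℂ) → ℂ} (hf : DifferentiableOn ℂ f C) (hg : DifferentiableOn ℂ g C)
    {w : Fin n → ℂ} (hw : w ∈ C) (hfg : f =ᶠ[𝓝 w] g) : EqOn f g C := by
  have hEo : IsOpen {z | f =ᶠ[𝓝 z] g} := isOpen_setOfPred_eventually_nhds
  have hsub : C ⊆ {z | f =ᶠ[𝓝 z] g} := by
    refine hCc.subset_of_closure_inter_subset hEo ⟨w, hw, hfg⟩ ?_
    rintro z ⟨hz, hzC⟩
    obtain ⟨r, hr, hrC⟩ := Metric.isOpen_iff.1 hC z hzC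
    obtain ⟨y, hyb, hy⟩ := mem_closure_iff.1 hz (ball z r) isOpen_ball (mem_ball_self hr)
    have hall : EqOn f g (ball z r) := by
      intro u hu
      let L : ℂ → (Fin n → ℂ) := fun t => y + t • (u - y)
      have hLd : Differentiable ℂ L := by fun_prop
      let T : Set ℂ := L ⁻¹' ball z r
      have hTo : IsOpen T := isOpen_ball.preimage hLd.continuous
      have hTc : Convex ℝ T := by
        intro s hs t ht α β hα hβ hαβ
        have h1 := (convex_ball z r) hs ht hα hβ hαβ
        have h2 : L (α • s + β • t) = α • L s + β • L t := by
          have hy' : y = α • y + β • y := by rw [← add_smul, hαβ, one_smul]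
          simp only [L, add_smul, smul_add, smul_assoc]
          nth_rewrite 1 [hy']
          abel
        show L _ ∈ ball z r
        rw [h2]; exact h1
      have hL0 : L 0 = y := by simp [L]
      have hL1 : L 1 = u := by simp [L]
      have h0 : (0 : ℂ) ∈ T := by show L 0 ∈ ball z r; rw [hL0]; exact hyb
      have h1 : (1 : ℂ) ∈ T := by show L 1 ∈ ball z r; rw [hL1]; exact hu
      have hfa : AnalyticOnNhd ℂ (f ∘ L) T :=
        (hf.comp hLd.differentiableOn (fun t ht => hrC ht)).analyticOnNhd hTo
      have hga : AnalyticOnNhd ℂ (g ∘ L) T :=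
        (hg.comp hLd.differentiableOn (fun t ht => hrC ht)).analyticOnNhd hTo
      have hte : Tendsto L (𝓝 0) (𝓝 y) := by
        have := hLd.continuous.tendsto 0
        rwa [hL0] at this
      have he : f ∘ L =ᶠ[𝓝 0] g ∘ L := hte.eventually hy
      have := hfa.eqOn_of_preconnected_of_eventuallyEq hga hTc.isPreconnected h0 he h1
      simpa [hL1] using this
    exact hall.eventuallyEq_of_mem (isOpen_ball.mem_nhds (mem_ball_self hr))
  exact fun z hz => (hsub hz).self_of_nhds

theorem analytic_polyhedron_isOpenSetOfHolomorphy {n m : ℕ} (U : Set (Fin n → ℂ))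
    (hU : IsOpen U) (f : Fin m → (Fin n → ℂ) → ℂ) (hf : ∀ j, DifferentiableOn ℂ (f j) U)
    (V : Set (Fin n → ℂ)) (hV : V = {z ∈ U | ∀ j, ‖f j z‖ < 1})
    (hcl : closure V ⊆ U) :
    ∀ x ∈ V, IsDomainOfHolomorphy (connectedComponentIn V x) := by
  intro x hx
  have hVU : V ⊆ U := fun z hz => hcl (subset_closure hz)
  have hlt : ∀ z ∈ V, ∀ j, ‖f j z‖ < 1 := fun z hz => by rw [hV] at hz; exact hz.2
  have hVo : IsOpen V := by
    rw [isOpen_iff_mem_nhds]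
    intro z hz
    have hzU := hU.mem_nhds (hVU hz)
    have h1 : ∀ᶠ y in 𝓝 z, ∀ j, ‖f j y‖ < 1 := eventually_all.2 fun j =>
      ((hf j).continuousOn.continuousAt hzU).norm.eventually (gt_mem_nhds (hlt z hz j))
    filter_upwards [hzU, h1] with y hy hy1
    rw [hV]
    exact ⟨hy, hy1⟩
  set D := connectedComponentIn V x with hDdef
  have hDo : IsOpen D := hVo.connectedComponentIn
  have hDV : D ⊆ V := connectedComponentIn_subset _ _
  obtain ⟨h, hhd, hhw⟩ := exists_wild
  have hhf : ∀ j, DifferentiableOn ℂ (fun z => h (f j z)) D := fun j =>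
    hhd.comp ((hf j).mono (hDV.trans hVU)) (fun z hz => by simpa using hlt z (hDV hz) j)
  refine ⟨hDo, isConnected_connectedComponentIn_iff.2 hx, ?_⟩
  by_cases hne : (Dᶜ).Nonempty
  swap
  · refine ⟨fun _ => 0, differentiableOn_const _, fun a ha => (hne ⟨a, ha⟩).elim⟩
  have hbex : ∀ p, ∃ b ∈ Dᶜ, infDist p Dᶜ = dist p b := fun p =>
    hDo.isClosed_compl.exists_infDist_eq_dist hne p
  choose b hbD hbd using hbex
  let σ : (Fin n → ℂ) → ℝ → (Fin n → ℂ) := fun p t => p + (t : ℝ) • (b p - p)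
  have hσc : ∀ p, Continuous (σ p) := fun p => by fun_prop
  have hσ1 : ∀ p, σ p 1 = b p := fun p => by simp [σ]
  have hball : ∀ p, ball p (dist p (b p)) ⊆ D := by
    intro p z hz
    by_contra hzD
    have := infDist_le_dist_of_mem (x := p) (s := Dᶜ) hzD
    rw [hbd, dist_comm p z] at this
    exact absurd (mem_ball.1 hz) (not_lt.2 this)
  have hσball : ∀ p ∈ D, ∀ t ∈ Ico (0 : ℝ) 1, σ p t ∈ ball p (dist p (b p)) := by
    intro p hp t ht
    have hpb : 0 < dist p (b p) := dist_pos.2 (fun e => hbD p (e ▸ hp))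
    have : dist (σ p t) p = t * dist p (b p) := by
      simp only [σ, dist_self_add_left, norm_smul, Real.norm_eq_abs, abs_of_nonneg ht.1]
      rw [dist_comm, dist_eq_norm]
    rw [mem_ball, this]
    nlinarith [ht.2]
  have hev : ∀ᶠ t in 𝓝[<] (1 : ℝ), t ∈ Ico (0 : ℝ) 1 := Ico_mem_nhdsLT (by norm_num)
  have hσt : ∀ p, Tendsto (σ p) (𝓝[<] 1) (𝓝 (b p)) := fun p => by
    have := (hσc p).tendsto 1
    rw [hσ1] at this
    exact this.mono_left nhdsWithin_le_nhds
  -- each segment ends at a point where some `f j` has modulus at least one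
  have hj : ∀ p ∈ D, ∃ j, 1 ≤ ‖f j (b p)‖ ∧ b p ∈ U := by
    intro p hp
    have hbcl : b p ∈ closure D := mem_closure_of_tendsto (hσt p)
      (hev.mono fun t ht => hball p (hσball p hp t ht))
    have hbU : b p ∈ U := hcl (closure_mono hDV hbcl)
    have hbV : b p ∉ V := by
      intro hbV
      obtain ⟨y, hy1, hy2⟩ := mem_closure_iff.1 hbcl _ (hVo.connectedComponentIn (x := b p))
        (mem_connectedComponentIn hbV)
      have e1 := connectedComponentIn_eq hy1
      have e2 := connectedComponentIn_eq hy2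
      apply hbD p
      rw [hDdef, e2, ← e1]
      exact mem_connectedComponentIn hbV
    by_contra! hcon
    apply hbV
    rw [hV]
    exact ⟨hbU, fun j => by
      by_contra hh
      exact hcon j (not_lt.1 hh) hbU⟩
  let S : (Fin n → ℂ) → Submodule ℂ (Fin m → ℂ) := fun p =>
    { carrier := {c | (fun t => ∑ j, c j * h (f j (σ p t))) =O[𝓝[<] (1 : ℝ)] (fun _ => (1 : ℝ))}
      zero_mem' := by
        simpa using Asymptotics.isBigO_zero (E' := ℂ) (fun _ : ℝ => (1 : ℝ)) (𝓝[<] (1 : ℝ))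
      add_mem' := by
        intro c d hc hd
        refine (Asymptotics.IsBigO.add hc hd).congr_left (fun t => ?_)
        simp [add_mul, Finset.sum_add_distrib]
      smul_mem' := by
        intro a c hc
        refine (Asymptotics.IsBigO.const_mul_left hc a).congr_left (fun t => ?_)
        simp [Finset.mul_sum, mul_assoc] }
  have hSne : ∀ p ∈ D, S p ≠ ⊤ := by
    intro p hp htop
    obtain ⟨j, hj1, hbU⟩ := hj p hp
    have hmem : Pi.single j 1 ∈ S p := by rw [htop]; trivial
    have hO : (fun t => h (f j (σ p t))) =O[𝓝[<] (1 : ℝ)] (fun _ => (1 : ℝ)) := by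
      refine Asymptotics.IsBigO.congr_left (show (fun t => ∑ i, (Pi.single j 1 : Fin m → ℂ) i * h (f i (σ p t))) =O[𝓝[<] (1 : ℝ)] (fun _ => (1 : ℝ)) from hmem) (fun t => ?_)
      simp [Pi.single_apply]
    obtain ⟨M, hM⟩ := hO.bound
    obtain ⟨t₀, ht₀, hsub⟩ := (mem_nhdsLT_iff_exists_Ioo_subset' (show (0 : ℝ) < 1 by norm_num)).1 (hM.and hev)
    have ht₀1 : t₀ < 1 := ht₀
    set t₁ := (t₀ + 1) / 2 with ht₁
    have hin : ∀ t ∈ Ico t₁ 1, t ∈ Ioo t₀ 1 := fun t ht => ⟨by linarith [ht.1], ht.2⟩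
    have hD1 : ∀ t ∈ Ico t₁ 1, σ p t ∈ V := fun t ht =>
      hDV (hball p (hσball p hp t (hsub (hin t ht)).2))
    have ht₁1 : t₁ < 1 := by linarith
    obtain ⟨s, hs1, hs2, hs⟩ := hhw M ‖f j (σ p t₁)‖ (hlt _ (hD1 t₁ ⟨le_rfl, ht₁1⟩) j)
    have hcont : ContinuousOn (fun t => ‖f j (σ p t)‖) (Icc t₁ 1) := by
      refine ((hf j).continuousOn.comp (hσc p).continuousOn ?_).norm
      intro t ht
      rcases ht.2.lt_or_eq with h1 | h1
      · exact hVU (hD1 t ⟨ht.1, h1⟩)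
      · rw [h1, hσ1]; exact hbU
    obtain ⟨t, ht, hts⟩ := intermediate_value_Icc ht₁1.le hcont
      (show s ∈ Icc _ _ from ⟨hs1.le, by simp only [hσ1]; linarith⟩)
    have ht1 : t < 1 := by
      rcases ht.2.lt_or_eq with h1 | h1
      · exact h1
      · simp only [h1, hσ1] at hts
        linarith
    have hb1 : ‖h (f j (σ p t))‖ ≤ M * ‖(1 : ℝ)‖ := (hsub (hin t ⟨ht.1, ht1⟩)).1
    have hb2 := hs _ hts
    simp only [norm_one, mul_one] at hb1
    linarith
  obtain ⟨Q, hQc, hQd⟩ := TopologicalSpace.exists_countable_dense (Fin n → ℂ)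
  have : Countable Q := hQc
  have : Countable (Q ∩ D : Set (Fin n → ℂ)) := (hQc.mono inter_subset_left)
  obtain ⟨c, hc⟩ := exists_not_mem_submodules (ι := (Q ∩ D : Set (Fin n → ℂ))) (fun p => S p)
    (fun p => hSne p p.2.2)
  have hFd : DifferentiableOn ℂ (fun z => ∑ j, c j * h (f j z)) D :=
    DifferentiableOn.fun_sum fun j _ => (hhf j).const_mul (c j)
  refine ⟨fun z => ∑ j, c j * h (f j z), hFd, ?_⟩
  rintro a ha ⟨V', hV'o, hV'c, haV', g, hg, W, hWo, ⟨w, hw⟩, hWs, hWe⟩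
  obtain ⟨y, hyV, hyD, hycl⟩ := exists_boundary hDo hV'o hV'c haV' ha (hWs hw)
  set C := connectedComponentIn (D ∩ V') w with hCdef
  have hCo : IsOpen C := (hDo.inter hV'o).connectedComponentIn
  have hCs : C ⊆ D ∩ V' := connectedComponentIn_subset _ _
  have hEq : EqOn (fun z => ∑ j, c j * h (f j z)) g C :=
    identity_Cn hCo isPreconnected_connectedComponentIn
      (hFd.mono (hCs.trans inter_subset_left)) (hg.mono (hCs.trans inter_subset_right))
      (mem_connectedComponentIn (hWs hw)) (hWe.eventuallyEq_of_mem (hWo.mem_nhds hw))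
  obtain ⟨ε, hε, hεV⟩ := Metric.isOpen_iff.1 hV'o y hyV
  obtain ⟨y', hy'1, hy'2⟩ := mem_closure_iff.1 hycl (ball y (ε / 2)) isOpen_ball
    (mem_ball_self (by positivity))
  obtain ⟨p, ⟨hpb, hpC⟩, hpQ⟩ := hQd.inter_open_nonempty _ (isOpen_ball.inter hCo) ⟨y', hy'1, hy'2⟩
  have hpD : p ∈ D := (hCs hpC).1
  have hdb : dist p (b p) ≤ dist p y := by
    rw [← hbd]; exact infDist_le_dist_of_mem hyD
  have hpy : dist p y < ε / 2 := hpb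
  have hbV' : b p ∈ V' := hεV (by
    rw [mem_ball]
    have := dist_triangle_left (b p) y p
    linarith)
  have hbC : ball p (dist p (b p)) ⊆ C := by
    have h1 : ball p (dist p (b p)) ⊆ D ∩ V' := fun z hz => ⟨hball p hz, hεV (by
      rw [mem_ball] at hz ⊢
      have := dist_triangle z p y
      linarith)⟩
    rw [hCdef, connectedComponentIn_eq hpC]
    refine IsPreconnected.subset_connectedComponentIn (convex_ball _ _).isPreconnected ?_ h1
    exact mem_ball_self (dist_pos.2 (fun e => hbD p (e ▸ hpD)))
  apply hc ⟨p, hpQ, hpD⟩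
  show (fun t => ∑ j, c j * h (f j (σ p t))) =O[𝓝[<] (1 : ℝ)] (fun _ => (1 : ℝ))
  have hgt : Tendsto (fun t => g (σ p t)) (𝓝[<] (1 : ℝ)) (𝓝 (g (b p))) :=
    ((hg.continuousOn.continuousAt (hV'o.mem_nhds hbV')).tendsto).comp (hσt p)
  refine (hgt.isBigO_one ℝ).congr' ?_ EventuallyEq.rfl
  filter_upwards [hev] with t ht
  exact (hEq (hbC (hσball p hpD t ht))).symm
end

section
/- Let K ⊆ ℂⁿ be a compact analytic polyhedron and V a neighbourhood of K. Then there exists an open set of holomorphy X such that K ⊆ X ⊆ V. -/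
open Set Metric Filter Topology

theorem idthm {n : ℕ} {C W : Set (Fin n → ℂ)} {h : (Fin n → ℂ) → ℂ} (hC : IsOpen C)
    (hCc : IsPreconnected C) (hh : DifferentiableOn ℂ h C) (hW : IsOpen W) (hWn : W.Nonempty)
    (hWC : W ⊆ C) (h0 : ∀ z ∈ W, h z = 0) : ∀ z ∈ C, h z = 0 := by
  set T : Set (Fin n → ℂ) := interior {z | h z = 0} with hT
  have hWT : W ⊆ T := interior_maximal (fun z hz => h0 z hz) hW
  have key : C ⊆ T := by
    refine hCc.subset_of_closure_inter_subset isOpen_interior ?_ ?_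
    · obtain ⟨w, hw⟩ := hWn
      exact ⟨w, hWC hw, hWT hw⟩
    · rintro z ⟨hzT, hzC⟩
      obtain ⟨ε, hε, hball⟩ := Metric.isOpen_iff.1 hC z hzC
      obtain ⟨t, htT, htz⟩ := Metric.mem_closure_iff.1 hzT ε hε
      have htb : t ∈ ball z ε := by rwa [mem_ball, dist_comm]
      refine mem_interior.2 ⟨ball z ε, ?_, isOpen_ball, mem_ball_self hε⟩
      intro y hy
      let l : ℂ → (Fin n → ℂ) := fun s => t + s • (y - t)
      have hl : Differentiable ℂ l := by
        intro s
        exact (differentiableAt_id.smul_const (y - t)).const_add t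
      let Ω : Set ℂ := l ⁻¹' ball z ε
      have hΩ : IsOpen Ω := isOpen_ball.preimage hl.continuous
      have hΩc : Convex ℝ Ω := by
        intro s hs s' hs' a b ha hb hab
        have := (convex_ball z ε) hs hs' ha hb hab
        show l (a • s + b • s') ∈ ball z ε
        convert this using 1
        simp only [l]
        have hab' : (a : ℂ) + b = 1 := by exact_mod_cast hab
        ext i
        simp only [Pi.add_apply, Pi.smul_apply, smul_eq_mul, Pi.sub_apply, Complex.real_smul]
        linear_combination (-(t i)) * hab'
      have hd : DifferentiableOn ℂ (h ∘ l) Ω :=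
        hh.comp hl.differentiableOn (fun s hs => hball hs)
      have han : AnalyticOnNhd ℂ (h ∘ l) Ω := hd.analyticOnNhd hΩ
      have hl0 : l 0 = t := by simp [l]
      have hl1 : l 1 = y := by simp [l]
      have hz0 : (0 : ℂ) ∈ Ω := by show l 0 ∈ ball z ε; rwa [hl0]
      have hz1 : (1 : ℂ) ∈ Ω := by show l 1 ∈ ball z ε; rwa [hl1]
      have hev : (h ∘ l) =ᶠ[𝓝 0] 0 := by
        have : T ∈ 𝓝 (l 0) := by rw [hl0]; exact isOpen_interior.mem_nhds htT
        filter_upwards [hl.continuous.continuousAt.preimage_mem_nhds this] with s hs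
        exact interior_subset (s := {z | h z = 0}) hs
      have := han.eqOn_zero_of_preconnected_of_eventuallyEq_zero hΩc.isPreconnected hz0 hev hz1
      simpa [hl1] using this
  intro z hz
  exact interior_subset (s := {z | h z = 0}) (key hz)

theorem comp_closed {n : ℕ} {S : Set (Fin n → ℂ)} (hS : IsOpen S) {p b : Fin n → ℂ}
    (hb : b ∈ closure (connectedComponentIn S p)) (hbS : b ∈ S) :
    b ∈ connectedComponentIn S p := by
  have ho : IsOpen (connectedComponentIn S b) := hS.connectedComponentIn
  obtain ⟨q, hq1, hq2⟩ := mem_closure_iff.1 hb _ ho (mem_connectedComponentIn hbS)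
  rw [connectedComponentIn_eq hq2, ← connectedComponentIn_eq hq1]
  exact mem_connectedComponentIn hbS

theorem bdry {n : ℕ} {S B : Set (Fin n → ℂ)} (hS : IsOpen S) {p a : Fin n → ℂ} (hp : p ∈ S)
    (hSB : S ⊆ B) (hB : IsPreconnected B) (haB : a ∈ B) (haS : a ∉ S) :
    ∃ b ∈ B, b ∉ S ∧ b ∈ closure (connectedComponentIn S p) := by
  by_contra hcon
  push Not at hcon
  have : B ⊆ connectedComponentIn S p := by
    refine hB.subset_of_closure_inter_subset hS.connectedComponentIn
      ⟨p, hSB hp, mem_connectedComponentIn hp⟩ ?_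
    rintro b ⟨hb, hbB⟩
    by_cases hbS : b ∈ S
    · exact comp_closed hS hb hbS
    · exact absurd hb (hcon b hbB hbS)
  exact haS (connectedComponentIn_subset _ _ (this haB))

theorem condens {ι E : Type} [Countable ι] (D : Set E) (u : ι → E → ℂ) (M : E → ℝ)
    (hM : ∀ z ∈ D, ∀ k, ‖u k z‖ ≤ M z) (S : ι → Set E) (hS : ∀ k, S k ⊆ D)
    (hub : ∀ k, ¬ ∃ N : ℝ, ∀ z ∈ S k, ‖u k z‖ ≤ N) :
    ∃ c : ι → ℂ, Summable (fun i => ‖c i‖) ∧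
      ∀ k, ¬ ∃ N : ℝ, ∀ z ∈ S k, ‖∑' i, c i * u i z‖ ≤ N := by
  classical
  let _ : TopologicalSpace ι := ⊥
  have _ : DiscreteTopology ι := ⟨rfl⟩
  have _ : Encodable ι := Encodable.ofCountable ι
  obtain ⟨a, ha0, A, haA, -⟩ := posSumOfEncodable (zero_lt_one) ι
  have hsum : ∀ (c : BoundedContinuousFunction ι ℂ) (z : E), z ∈ D →
      Summable (fun i => ‖c i * a i * u i z‖) := by
    intro c z hz
    refine Summable.of_nonneg_of_le (fun i => norm_nonneg _) (fun i => ?_)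
      ((haA.summable.mul_left ‖c‖).mul_right (M z))
    rw [norm_mul, norm_mul, Complex.norm_real, Real.norm_of_nonneg (ha0 i).le]
    have h1 := c.norm_coe_le_norm i
    have h2 := hM z hz i
    have h3 := (ha0 i).le
    gcongr
  have hL : ∀ z ∈ D, ∃ L : BoundedContinuousFunction ι ℂ →L[ℂ] ℂ,
      ∀ c, L c = ∑' i, c i * a i * u i z := by
    intro z hz
    refine ⟨LinearMap.mkContinuous
      { toFun := fun c => ∑' i, c i * a i * u i z
        map_add' := ?_
        map_smul' := ?_ } (∑' i, a i * M z) ?_, fun c => rfl⟩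
    · intro c d
      rw [← (hsum c z hz).of_norm.tsum_add (hsum d z hz).of_norm]
      refine tsum_congr fun i => ?_
      simp only [BoundedContinuousFunction.coe_add, Pi.add_apply]
      ring
    · intro s c
      simp only [RingHom.id_apply, smul_eq_mul]
      rw [← tsum_mul_left]
      refine tsum_congr fun i => ?_
      simp only [BoundedContinuousFunction.coe_smul, smul_eq_mul]
      ring
    · intro c
      simp only [LinearMap.coe_mk, AddHom.coe_mk]
      refine (norm_tsum_le_tsum_norm (hsum c z hz)).trans ?_
      rw [← tsum_mul_right]
      refine Summable.tsum_le_tsum (fun i => ?_) (hsum c z hz)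
        ((haA.summable.mul_right (M z)).mul_right ‖c‖)
      rw [norm_mul, norm_mul, Complex.norm_real, Real.norm_of_nonneg (ha0 i).le]
      have h1 := c.norm_coe_le_norm i
      have h2 := hM z hz i
      have h3 := (ha0 i).le
      calc ‖c i‖ * a i * ‖u i z‖ ≤ ‖c‖ * a i * M z := by gcongr
        _ = _ := by ring
  by_contra hcon
  push Not at hcon
  let T : ι × ℕ → Set (BoundedContinuousFunction ι ℂ) := fun q =>
    {c | ∀ z ∈ S q.1, ‖∑' i, c i * a i * u i z‖ ≤ q.2}
  have hTc : ∀ q, IsClosed (T q) := by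
    intro q
    have : T q = ⋂ z ∈ S q.1, {c | ‖∑' i, c i * a i * u i z‖ ≤ q.2} := by
      ext c; simp [T]
    rw [this]
    refine isClosed_biInter fun z hz => ?_
    obtain ⟨L, hL⟩ := hL z (hS _ hz)
    simp only [← hL]
    exact isClosed_le L.continuous.norm continuous_const
  have hTu : ⋃ q, T q = univ := by
    refine eq_univ_of_forall fun c => ?_
    obtain ⟨k, N, hN⟩ := hcon (fun i => c i * a i) (by
      refine Summable.of_nonneg_of_le (fun i => norm_nonneg _) (fun i => ?_)
        (haA.summable.mul_left ‖c‖)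
      rw [norm_mul, Complex.norm_real, Real.norm_of_nonneg (ha0 i).le]
      have h1 := c.norm_coe_le_norm i
      have h3 := (ha0 i).le
      gcongr)
    obtain ⟨N', hN'⟩ := exists_nat_ge N
    exact mem_iUnion.2 ⟨(k, N'), fun z hz => (hN z hz).trans hN'⟩
  obtain ⟨⟨k, N⟩, c0, hc0⟩ := nonempty_interior_of_iUnion_of_closed hTc hTu
  obtain ⟨ε, hε, hball⟩ := Metric.isOpen_iff.1 isOpen_interior c0 hc0
  let e : BoundedContinuousFunction ι ℂ :=
    BoundedContinuousFunction.ofNormedAddCommGroupDiscrete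
      (fun i => if i = k then ((ε / 2 : ℝ) : ℂ) else 0) (ε / 2) (by
        intro i
        split_ifs
        · rw [Complex.norm_real, Real.norm_of_nonneg (by positivity)]
        · simp; positivity)
  have he : ∀ i, e i = if i = k then ((ε / 2 : ℝ) : ℂ) else 0 := fun i => rfl
  have hen : ‖e‖ ≤ ε / 2 := by
    refine (BoundedContinuousFunction.norm_le (by positivity)).2 fun i => ?_
    rw [he]
    split_ifs
    · rw [Complex.norm_real, Real.norm_of_nonneg (by positivity)]
    · simp; positivity
  have h1 : c0 ∈ T (k, N) := interior_subset hc0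
  have h2 : c0 + e ∈ T (k, N) := by
    refine interior_subset (hball ?_)
    rw [mem_ball, dist_eq_norm, add_sub_cancel_left]
    linarith
  refine hub k ⟨(N + N) / (ε / 2 * a k), fun z hz => ?_⟩
  obtain ⟨L, hL⟩ := hL z (hS _ hz)
  have h3 : ‖L c0‖ ≤ N := by rw [hL]; exact h1 z hz
  have h4 : ‖L (c0 + e)‖ ≤ N := by rw [hL]; exact h2 z hz
  have h5 : L e = ((ε / 2 : ℝ) : ℂ) * a k * u k z := by
    rw [hL, tsum_eq_single k]
    · simp [he]
    · intro i hi
      simp [he, hi]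
  have h6 : ‖L e‖ ≤ N + N := by
    have : L e = L (c0 + e) - L c0 := by rw [map_add]; ring
    rw [this]
    exact (norm_sub_le _ _).trans (add_le_add h4 h3)
  rw [h5, norm_mul, norm_mul, Complex.norm_real, Complex.norm_real,
    Real.norm_of_nonneg (ha0 k).le, Real.norm_of_nonneg (by positivity)] at h6
  have := ha0 k
  rw [le_div_iff₀ (by positivity)]
  linarith

theorem holoSum {ι : Type} (c w : ι → ℂ) (r : ℝ) (hw : ∀ i, ‖w i‖ = r)
    (hc : Summable (fun i => ‖c i‖)) (p : ι → Prop) [DecidablePred p] :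
    DifferentiableOn ℂ (fun x => ∑' i, if p i then c i * (w i - x)⁻¹ else 0) (ball 0 r) ∧
    ∀ x ∈ ball (0 : ℂ) r, Summable (fun i => if p i then c i * (w i - x)⁻¹ else 0) := by
  have bnd : ∀ ρ < r, ∀ i, ∀ x ∈ ball (0 : ℂ) ρ,
      ‖if p i then c i * (w i - x)⁻¹ else 0‖ ≤ ‖c i‖ * (r - ρ)⁻¹ := by
    intro ρ hρ i x hx
    rw [mem_ball_zero_iff] at hx
    have h0 : 0 < r - ρ := sub_pos.2 hρ
    split_ifs
    · rw [norm_mul, norm_inv]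
      have : r - ρ ≤ ‖w i - x‖ := by
        have := norm_sub_norm_le (w i) x
        rw [hw] at this
        linarith
      gcongr
    · simp; positivity
  constructor
  · intro x hx
    rw [mem_ball_zero_iff] at hx
    obtain ⟨ρ, h1, h2⟩ := exists_between hx
    have := Complex.differentiableOn_tsum_of_summable_norm (U := ball (0 : ℂ) ρ)
      (F := fun i x => if p i then c i * (w i - x)⁻¹ else 0)
      (hc.mul_right (r - ρ)⁻¹) (by
        intro i
        by_cases hp : p i
        · simp only [hp, if_true]
          intro y hy
          rw [mem_ball_zero_iff] at hy
          have hne : w i - y ≠ 0 := by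
            intro h
            have := hw i
            rw [sub_eq_zero.1 h] at this
            linarith
          exact (((differentiableAt_const _).sub differentiableAt_id).inv hne).const_mul _
            |>.differentiableWithinAt
        · simp only [hp, if_false]
          exact differentiableOn_const _) isOpen_ball (bnd ρ h2)
    exact (this.differentiableAt (isOpen_ball.mem_nhds
      (by rwa [mem_ball_zero_iff]))).differentiableWithinAt
  · intro x hx
    rw [mem_ball_zero_iff] at hx
    obtain ⟨ρ, h1, h2⟩ := exists_between hx
    exact Summable.of_norm_bounded (hc.mul_right (r - ρ)⁻¹)
      (fun i => bnd ρ h2 i x (by rwa [mem_ball_zero_iff]))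

theorem domainHol {n m : ℕ} {D : Set (Fin n → ℂ)} (hD : IsOpen D) (hDc : IsConnected D)
    (f : Fin m → (Fin n → ℂ) → ℂ) (hf : ∀ j, DifferentiableOn ℂ (f j) D) (r : ℝ)
    (hlt : ∀ z ∈ D, ∀ j, ‖f j z‖ < r)
    (hb : ∀ b ∈ closure D, b ∉ D → ∃ j, ‖f j b‖ = r ∧ ContinuousAt (f j) b) :
    IsDomainOfHolomorphy D := by
  classical
  let q : ℕ → (Fin n → ℂ) := TopologicalSpace.denseSeq (Fin n → ℂ)
  have hq : DenseRange q := TopologicalSpace.denseRange_denseSeq _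
  let B : ℕ × ℕ × ℕ → Set (Fin n → ℂ) := fun t => ball (q t.1) (1 / ((t.2.1 : ℝ) + 1))
  let P : Set (ℕ × ℕ × ℕ) := {t | q t.2.2 ∈ D ∩ B t ∧ ∃ a ∈ B t, a ∉ D}
  let C : ℕ × ℕ × ℕ → Set (Fin n → ℂ) := fun t => connectedComponentIn (D ∩ B t) (q t.2.2)
  have hCD : ∀ t, C t ⊆ D := fun t => (connectedComponentIn_subset _ _).trans inter_subset_left
  have hne : ∀ (w : ℂ), ‖w‖ = r → ∀ z ∈ D, ∀ j, w - f j z ≠ 0 := by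
    intro w hw z hz j h
    have := hlt z hz j
    rw [← sub_eq_zero.1 h, hw] at this
    exact lt_irrefl _ this
  have hP : ∀ t : P, ∃ (j : Fin m) (w : ℂ), ‖w‖ = r ∧
      ¬ ∃ N : ℝ, ∀ z ∈ C t, ‖(w - f j z)⁻¹‖ ≤ N := by
    rintro ⟨t, ht, a, haB, haD⟩
    obtain ⟨b, hbB, hbS, hbC⟩ := bdry (hD.inter isOpen_ball) ht inter_subset_right
      (convex_ball _ _).isPreconnected haB (fun h => haD h.1)
    have hbD : b ∉ D := fun h => hbS ⟨h, hbB⟩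
    obtain ⟨j, hj, hjc⟩ := hb b (closure_mono (hCD t) hbC) hbD
    refine ⟨j, f j b, hj, ?_⟩
    rintro ⟨N, hN⟩
    have hev : ∀ᶠ z in 𝓝 b, ‖f j b - f j z‖ < (|N| + 1)⁻¹ := by
      have h1 : ContinuousAt (fun z => ‖f j b - f j z‖) b := (continuousAt_const.sub hjc).norm
      refine h1.eventually_lt continuousAt_const ?_
      simp only [sub_self, norm_zero]
      positivity
    obtain ⟨z, hzC, hz⟩ := ((mem_closure_iff_frequently.1 hbC).and_eventually hev).exists
    have h2 := hN z hzC
    have h3 := norm_pos_iff.2 (hne _ hj z (hCD t hzC) j)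
    rw [norm_inv] at h2
    have h4 := (lt_inv_comm₀ h3 (by positivity)).1 hz
    have := le_abs_self N
    linarith
  choose j w hw hun using hP
  obtain ⟨c, hc, hcu⟩ := condens (ι := P) D (fun i z => (w i - f (j i) z)⁻¹)
    (fun z => ∑ k, (r - ‖f k z‖)⁻¹) (by
      intro z hz k
      have h0 : ∀ k, 0 < r - ‖f k z‖ := fun k => sub_pos.2 (hlt z hz k)
      have h1 : (r - ‖f (j k) z‖)⁻¹ ≤ ∑ k, (r - ‖f k z‖)⁻¹ :=
        Finset.single_le_sum (f := fun k => (r - ‖f k z‖)⁻¹)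
          (fun k _ => (inv_pos.2 (h0 k)).le) (Finset.mem_univ (j k))
      refine le_trans ?_ h1
      rw [norm_inv]
      have := norm_sub_norm_le (w k) (f (j k) z)
      rw [hw] at this
      have := h0 (j k)
      gcongr) (fun t => C t) (fun t => hCD t) hun
  set F : (Fin n → ℂ) → ℂ := fun z => ∑' i, c i * (w i - f (j i) z)⁻¹ with hF
  have hFd : DifferentiableOn ℂ F D := by
    have h1 : DifferentiableOn ℂ (fun z => ∑ k : Fin m,
        (fun x => ∑' i, if j i = k then c i * (w i - x)⁻¹ else 0) (f k z)) D := by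
      refine DifferentiableOn.fun_sum fun k _ => ?_
      exact ((holoSum c w r hw hc (fun i => j i = k)).1).comp (hf k)
        (fun z hz => by rw [mem_ball_zero_iff]; exact hlt z hz k)
    refine h1.congr fun z hz => ?_
    show ∑' i, c i * (w i - f (j i) z)⁻¹ = _
    rw [← Summable.tsum_finsetSum (fun k _ => (holoSum c w r hw hc (fun i => j i = k)).2 (f k z)
      (by rw [mem_ball_zero_iff]; exact hlt z hz k))]
    refine tsum_congr fun i => ?_
    simp
  refine ⟨hD, hDc, F, hFd, ?_⟩
  rintro a ha ⟨V, hV, hVc, haV, g, hg, W, hW, ⟨w0, hw0⟩, hWU, hFg⟩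
  have hS : IsOpen (D ∩ V) := hD.inter hV
  set C0 := connectedComponentIn (D ∩ V) w0 with hC0
  have hC0o : IsOpen C0 := hS.connectedComponentIn
  have hC0S : C0 ⊆ D ∩ V := connectedComponentIn_subset _ _
  have heq : ∀ z ∈ C0, F z - g z = 0 := by
    refine idthm (W := W ∩ C0) hC0o isPreconnected_connectedComponentIn
      ((hFd.mono (hC0S.trans inter_subset_left)).sub (hg.mono (hC0S.trans inter_subset_right)))
      (hW.inter hC0o) ⟨w0, hw0, mem_connectedComponentIn (hWU hw0)⟩ inter_subset_right ?_
    rintro z ⟨hz, -⟩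
    rw [hFg hz, sub_self]
  obtain ⟨b, hbV, hbS, hbC⟩ := bdry hS (hWU hw0) inter_subset_right hVc.isPreconnected haV
    (fun h => ha h.1)
  have hbD : b ∉ D := fun h => hbS ⟨h, hbV⟩
  have hgb : ∀ᶠ z in 𝓝 b, z ∈ V ∧ ‖g z‖ < ‖g b‖ + 1 := by
    refine (hV.eventually_mem hbV).and ?_
    have h1 : ContinuousAt (fun z => ‖g z‖) b :=
      (hg.differentiableAt (hV.mem_nhds hbV)).continuousAt.norm
    exact h1.eventually_lt continuousAt_const (by linarith)
  obtain ⟨ε, hε, hball⟩ := Metric.eventually_nhds_iff_ball.1 hgb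
  obtain ⟨k, hk⟩ := exists_nat_one_div_lt (half_pos hε)
  have hkpos : (0 : ℝ) < 1 / ((k : ℝ) + 1) := by positivity
  obtain ⟨i, hi⟩ := hq.exists_dist_lt b hkpos
  have hbB : b ∈ ball (q i) (1 / ((k : ℝ) + 1)) := hi
  have hBε : ball (q i) (1 / ((k : ℝ) + 1)) ⊆ ball b ε := by
    refine ball_subset_ball' ?_
    rw [dist_comm]
    linarith
  obtain ⟨y, hyB, hyC⟩ := mem_closure_iff.1 hbC _ isOpen_ball hbB
  obtain ⟨l, hl⟩ := hq.exists_mem_open (isOpen_ball.inter hC0o) ⟨y, hyB, hyC⟩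
  have ht : ((i, k, l) : ℕ × ℕ × ℕ) ∈ P := ⟨⟨(hC0S hl.2).1, hl.1⟩, b, hbB, hbD⟩
  have hBV : B (i, k, l) ⊆ V := fun z hz => (hball z (hBε hz)).1
  have hCC : C (i, k, l) ⊆ C0 := by
    rw [hC0, connectedComponentIn_eq hl.2]
    exact isPreconnected_connectedComponentIn.subset_connectedComponentIn
      (mem_connectedComponentIn ht.1)
      ((connectedComponentIn_subset _ _).trans (inter_subset_inter_right _ hBV))
  refine hcu ⟨_, ht⟩ ⟨‖g b‖ + 1, fun z hz => ?_⟩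
  have h1 : F z = g z := sub_eq_zero.1 (heq z (hCC hz))
  have h2 : z ∈ B (i, k, l) := (connectedComponentIn_subset _ _ hz).2
  show ‖F z‖ ≤ _
  rw [h1]
  exact (hball z (hBε h2)).2.le

/-- Let `K = {z ∈ U : |f_j z| ≤ 1, 1 ≤ j ≤ m}` be a compact analytic polyhedron and `V` an open
neighbourhood of `K`.  Then there is an open set of holomorphy `X` (an open set all of whose
connected components are domains of holomorphy) with `K ⊆ X ⊆ V`. -/
theorem compact_analytic_polyhedron_approx {n m : ℕ} (U : Set (Fin n → ℂ)) (hU : IsOpen U)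
    (f : Fin m → (Fin n → ℂ) → ℂ) (hf : ∀ j, DifferentiableOn ℂ (f j) U)
    (K : Set (Fin n → ℂ)) (hK : K = {z ∈ U | ∀ j, ‖f j z‖ ≤ 1}) (hKc : IsCompact K)
    (V : Set (Fin n → ℂ)) (hV : IsOpen V) (hKV : K ⊆ V) :
    ∃ X : Set (Fin n → ℂ), IsOpen X ∧ K ⊆ X ∧ X ⊆ V ∧
      ∀ x ∈ X, IsDomainOfHolomorphy (connectedComponentIn X x) := by 
  obtain ⟨V', hV'o, hKV', hV'c, hV'k⟩ := exists_open_between_and_isCompact_closure hKc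
    (hU.inter hV) (subset_inter (by rw [hK]; exact fun z hz => hz.1) hKV)
  have hcont : ∀ z ∈ U, ∀ j, ContinuousAt (f j) z := fun z hz j =>
    ((hf j).differentiableAt (hU.mem_nhds hz)).continuousAt
  have hfr : IsCompact (frontier V') := hV'k.of_isClosed_subset isClosed_frontier
    frontier_subset_closure
  have hr : ∃ r : ℝ, 1 < r ∧ ∀ z ∈ frontier V', ∃ j, r ≤ ‖f j z‖ := by
    refine hfr.induction_on (p := fun s => ∃ r : ℝ, 1 < r ∧ ∀ z ∈ s, ∃ j, r ≤ ‖f j z‖)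
      ⟨2, by norm_num, by simp⟩ ?_ ?_ ?_
    · rintro s t hst ⟨r, h1, h2⟩
      exact ⟨r, h1, fun z hz => h2 z (hst hz)⟩
    · rintro s t ⟨r, h1, h2⟩ ⟨r', h1', h2'⟩
      refine ⟨min r r', lt_min h1 h1', ?_⟩
      rintro z (hz | hz)
      · obtain ⟨j, hj⟩ := h2 z hz
        exact ⟨j, (min_le_left _ _).trans hj⟩
      · obtain ⟨j, hj⟩ := h2' z hz
        exact ⟨j, (min_le_right _ _).trans hj⟩
    · intro z hz
      have hzU : z ∈ U := (hV'c (frontier_subset_closure hz)).1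
      have hzK : z ∉ K := fun h => by
        rw [hV'o.frontier_eq] at hz
        exact hz.2 (hKV' h)
      have : ∃ j, 1 < ‖f j z‖ := by
        by_contra hcon
        push Not at hcon
        exact hzK (by rw [hK]; exact ⟨hzU, hcon⟩)
      obtain ⟨j, hj⟩ := this
      obtain ⟨r, h1, h2⟩ := exists_between hj
      refine ⟨{y | r < ‖f j y‖}, mem_nhdsWithin_of_mem_nhds ?_, r, h1, fun y hy => ⟨j, le_of_lt hy⟩⟩
      exact continuousAt_const.eventually_lt (hcont z hzU j).norm h2
  obtain ⟨r, hr1, hr⟩ := hr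
  let X : Set (Fin n → ℂ) := {z | z ∈ V' ∧ ∀ j, ‖f j z‖ < r}
  have hX : IsOpen X := by
    rw [isOpen_iff_mem_nhds]
    rintro z ⟨hz, hzr⟩
    have hzU : z ∈ U := (hV'c (subset_closure hz)).1
    refine (hV'o.eventually_mem hz).and (eventually_all.2 fun j => ?_)
    exact (hcont z hzU j).norm.eventually_lt continuousAt_const (hzr j)
  refine ⟨X, hX, ?_, fun z hz => (hV'c (subset_closure hz.1)).2, ?_⟩
  · intro z hz
    refine ⟨hKV' hz, fun j => ?_⟩
    rw [hK] at hz
    exact (hz.2 j).trans_lt hr1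
  · intro x hx
    have hDX : connectedComponentIn X x ⊆ X := connectedComponentIn_subset _ _
    refine domainHol hX.connectedComponentIn (isConnected_connectedComponentIn_iff.2 hx) f
      (fun j => (hf j).mono fun z hz => (hV'c (subset_closure (hDX hz).1)).1) r
      (fun z hz j => (hDX hz).2 j) ?_
    intro b hb hbD
    have hbX : b ∉ X := fun h => hbD (comp_closed hX hb h)
    have hbV' : b ∈ closure V' := closure_mono (fun z hz => (hDX hz).1) hb
    have hbU : b ∈ U := (hV'c hbV').1
    have hle : ∀ j, ‖f j b‖ ≤ r := by
      intro j
      by_contra hcon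
      push Not at hcon
      have hev := continuousAt_const.eventually_lt (hcont b hbU j).norm hcon
      obtain ⟨z, hz, hz'⟩ := ((mem_closure_iff_frequently.1 hb).and_eventually hev).exists
      exact absurd hz' (not_lt.2 ((hDX hz).2 j).le)
    have hge : ∃ j, r ≤ ‖f j b‖ := by
      by_cases h : b ∈ V'
      · by_contra hcon
        push Not at hcon
        exact hbX ⟨h, hcon⟩
      · exact hr b (by rw [hV'o.frontier_eq]; exact ⟨hbV', h⟩)
    obtain ⟨j, hj⟩ := hge
    exact ⟨j, le_antisymm (hle j) hj, hcont b hbU j⟩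
end

section
/- Let U ⊆ ℂⁿ be a domain, K ⊆ U a compact set such that K equals its holomorphically convex hull K̂ in U, and V ⊆ U a neighbourhood of K. Then there exist finitely many holomorphic functions f₁,…,f_m on U and an open set W with V ⊇ W ⊇ K such that L := {z ∈ W : |f_j(z)| ≤ 1 for 1 ≤ j ≤ m} is a compact analytic polyhedron with K ⊆ L ⊆ V. -/
open Set Metric Filter Topology

/-- The holomorphically convex hull of `K` in `U`:
`K̂ = {z ∈ U : ‖f z‖ ≤ sup_{w ∈ K} ‖f w‖ for every f holomorphic on U}`. -/
def holConvexHull {n : ℕ} (U K : Set (Fin n → ℂ)) : Set (Fin n → ℂ) :=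
  {z ∈ U | ∀ f : (Fin n → ℂ) → ℂ, DifferentiableOn ℂ f U → ‖f z‖ ≤ ⨆ w : K, ‖f w‖}

/-- Let `U` be a domain, `K ⊆ U` compact with `K = K̂` (its holomorphically convex hull in `U`)
and `V ⊆ U` an open neighbourhood of `K`.  Then there exist finitely many functions
`f₁, …, f_m` holomorphic on `U` and an open set `W` with `K ⊆ W ⊆ V` such that
`L = {z ∈ W : |f_j z| ≤ 1, 1 ≤ j ≤ m}` is a compact analytic polyhedron with `K ⊆ L ⊆ V`. -/
theorem exists_compact_analytic_polyhedron {n : ℕ} (U : Set (Fin n → ℂ))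
    (hUo : IsOpen U) (hUc : IsConnected U)
    (K : Set (Fin n → ℂ)) (hKU : K ⊆ U) (hK : IsCompact K)
    (hhull : holConvexHull U K = K)
    (V : Set (Fin n → ℂ)) (hVo : IsOpen V) (hKV : K ⊆ V) (hVU : V ⊆ U) :
    ∃ (m : ℕ) (f : Fin m → (Fin n → ℂ) → ℂ), (∀ j, DifferentiableOn ℂ (f j) U) ∧
      ∃ W : Set (Fin n → ℂ), IsOpen W ∧ K ⊆ W ∧ W ⊆ V ∧
        IsCompact {z ∈ W | ∀ j, ‖f j z‖ ≤ 1} ∧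
        K ⊆ {z ∈ W | ∀ j, ‖f j z‖ ≤ 1} ∧
        {z ∈ W | ∀ j, ‖f j z‖ ≤ 1} ⊆ V := by
  obtain ⟨L, hL, hKL, hLV⟩ := exists_compact_between hK hVo hKV
  have hLU : L ⊆ U := hLV.trans hVU
  have key : ∀ z ∈ L \ interior L, ∃ g : (Fin n → ℂ) → ℂ, DifferentiableOn ℂ g U ∧
      (∀ w ∈ K, ‖g w‖ ≤ 1) ∧ 1 < ‖g z‖ := by
    intro z hz
    have hzK : z ∉ holConvexHull U K := by
      rw [hhull]
      exact fun h => hz.2 (hKL h)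
    have hex : ∃ f : (Fin n → ℂ) → ℂ, DifferentiableOn ℂ f U ∧ (⨆ w : K, ‖f w‖) < ‖f z‖ := by
      by_contra hcon
      apply hzK
      refine ⟨hLU hz.1, fun f hf => ?_⟩
      by_contra h
      exact hcon ⟨f, hf, not_le.mp h⟩
    obtain ⟨f, hf, hlt⟩ := hex
    obtain ⟨c, hc1, hc2⟩ := exists_between hlt
    have hc0 : 0 < c := lt_of_le_of_lt (Real.iSup_nonneg fun w => norm_nonneg _) hc1
    have hbdd : BddAbove (Set.range fun w : K => ‖f w‖) := by
      have h := (hK.image_of_continuousOn (hf.continuousOn.mono hKU).norm).bddAbove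
      rwa [Set.image_eq_range] at h
    have hn : ∀ w, ‖f w / (c : ℂ)‖ = ‖f w‖ / c := by
      intro w
      rw [norm_div, Complex.norm_real, Real.norm_of_nonneg hc0.le]
    refine ⟨fun w => f w / (c : ℂ), by simpa only [div_eq_mul_inv] using hf.mul_const _, fun w hw => ?_, ?_⟩
    · rw [hn, div_le_one hc0]
      exact (le_ciSup hbdd ⟨w, hw⟩).trans hc1.le
    · rw [hn, one_lt_div hc0]
      exact hc2
  choose! g hg1 hg2 hg3 using key
  have hC : IsCompact (L \ interior L) := hL.diff isOpen_interior
  obtain ⟨t, htC, ht⟩ := hC.elim_nhds_subcover (fun z => {w | 1 < ‖g z w‖}) (by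
    intro z hz
    have hcont : ContinuousAt (g z) z :=
      (hg1 z hz).continuousOn.continuousAt (hUo.mem_nhds (hLU hz.1))
    exact hcont.norm.eventually (lt_mem_nhds (hg3 z hz)))
  let e := t.equivFin
  have hd : ∀ j, DifferentiableOn ℂ (g (e.symm j)) U := fun j => hg1 _ (htC _ (e.symm j).2)
  refine ⟨t.card, fun j => g (e.symm j), hd, interior L, isOpen_interior, hKL,
    interior_subset.trans hLV, ?_, fun w hw => ⟨hKL hw, fun j => hg2 _ (htC _ (e.symm j).2) w hw⟩,
    fun z hz => hLV (interior_subset hz.1)⟩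
  have heq : {z ∈ interior L | ∀ j, ‖g (e.symm j) z‖ ≤ 1} =
      L ∩ ⋂ j, (L ∩ (fun z => ‖g (e.symm j) z‖) ⁻¹' Set.Iic 1) := by
    ext z
    simp only [Set.mem_setOf_eq, Set.mem_inter_iff, Set.mem_iInter, Set.mem_preimage, Set.mem_Iic]
    constructor
    · rintro ⟨h1, h2⟩
      exact ⟨interior_subset h1, fun j => ⟨interior_subset h1, h2 j⟩⟩
    · rintro ⟨h1, h2⟩
      refine ⟨?_, fun j => (h2 j).2⟩
      by_contra h
      obtain ⟨x, hx, hxz⟩ := Set.mem_iUnion₂.mp (ht ⟨h1, h⟩)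
      have h3 := (h2 (e ⟨x, hx⟩)).2
      rw [Equiv.symm_apply_apply] at h3
      exact absurd hxz (not_lt.mpr h3)
  rw [heq]
  exact hL.inter_right (isClosed_iInter fun j =>
    ((hd j).continuousOn.mono hLU).norm.preimage_isClosed_of_isClosed hL.isClosed isClosed_Iic)
end

section
/- If U ⊆ ℂⁿ is a domain of holomorphy then U satisfies the continuity principle. -/
open Set Metric Filter Topology

/-- A sequence of sets `A j` converges to the set `B` (in the `L∞` metric of `Fin n → ℂ`): for
every `ε > 0`, eventually each of `A j` and `B` is contained in the `ε`-enlargement of the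
other. -/
def SetConvergesTo {n : ℕ} (A : ℕ → Set (Fin n → ℂ)) (B : Set (Fin n → ℂ)) : Prop :=
  ∀ ε : ℝ, 0 < ε → ∃ J : ℕ, ∀ j ≥ J,
    A j ⊆ Metric.thickening ε B ∧ B ⊆ Metric.thickening ε (A j)

/-- `U` satisfies the continuity principle: for every sequence of holomorphic discs `S j`
(continuous on the closed unit disc, holomorphic on the open unit disc) contained together with
their boundaries in `U`, if the boundaries `∂S_j = S j '' sphere 0 1` converge to a compact
`B ⊆ U` and the discs `S j '' ball 0 1` converge to a compact `T`, then `T ⊆ U`. -/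
def SatisfiesContinuityPrinciple {n : ℕ} (U : Set (Fin n → ℂ)) : Prop :=
  ∀ S : ℕ → ℂ → (Fin n → ℂ),
    (∀ j, ContinuousOn (S j) (Metric.closedBall 0 1)) →
    (∀ j, DifferentiableOn ℂ (S j) (Metric.ball 0 1)) →
    (∀ j, S j '' Metric.closedBall 0 1 ⊆ U) →
    ∀ B T : Set (Fin n → ℂ), IsCompact B → B ⊆ U → IsCompact T →
      SetConvergesTo (fun j => S j '' Metric.sphere 0 1) B →
      SetConvergesTo (fun j => S j '' Metric.ball 0 1) T →
      T ⊆ U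

/-- Crude Cauchy estimate for the first derivative. -/
lemma norm_fderiv_le_of_bounded {E F : Type*} [NormedAddCommGroup E] [NormedSpace ℂ E]
    [NormedAddCommGroup F] [NormedSpace ℂ F] {g : E → F} {y : E} {d C : ℝ} (hd : 0 < d)
    (hg : DifferentiableOn ℂ g (ball y d)) (hC : ∀ z ∈ ball y d, ‖g z‖ ≤ C) :
    ‖fderiv ℂ g y‖ ≤ 2 * C / d := by
  refine Complex.norm_fderiv_le_div_of_mapsTo_ball hg ?_ hd
  intro z hz
  rw [mem_closedBall, dist_eq_norm]
  have h1 := hC z hz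
  have h2 := hC y (mem_ball_self hd)
  have h3 := norm_sub_le (g z) (g y)
  linarith

/-- Directional derivatives of holomorphic functions are holomorphic. -/
lemma differentiableOn_fderiv_apply {n : ℕ} {U : Set (Fin n → ℂ)} (hU : IsOpen U)
    {f : (Fin n → ℂ) → ℂ} (hf : DifferentiableOn ℂ f U) (v : Fin n → ℂ) :
    DifferentiableOn ℂ (fun x => fderiv ℂ f x v) U := by
  intro x₀ hx₀
  apply DifferentiableAt.differentiableWithinAt
  -- a ball on which `f` is bounded
  obtain ⟨r, hr, hrU, M, hM⟩ : ∃ r > (0 : ℝ), ball x₀ (3 * r) ⊆ U ∧ ∃ M, ∀ x ∈ ball x₀ (3 * r),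
      ‖f x‖ ≤ M := by
    have hc : ContinuousAt f x₀ := (hf.differentiableAt (hU.mem_nhds hx₀)).continuousAt
    have h1 : ∀ᶠ x in 𝓝 x₀, ‖f x‖ < ‖f x₀‖ + 1 :=
      hc.norm.eventually_lt continuousAt_const (by simp)
    obtain ⟨s, hs, hs'⟩ := Metric.eventually_nhds_iff_ball.1 (h1.and (hU.eventually_mem hx₀))
    refine ⟨s / 3, by positivity, ?_, ‖f x₀‖ + 1, ?_⟩
    · intro x hx; exact (hs' x (by convert hx using 2; ring)).2
    · intro x hx; exact (hs' x (by convert hx using 2; ring)).1.le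
  obtain ⟨ρ, hρ, hρv⟩ : ∃ ρ > (0 : ℝ), ρ * ‖v‖ < r := by
    refine ⟨r / (‖v‖ + 1), by positivity, ?_⟩
    rw [div_mul_eq_mul_div, div_lt_iff₀ (by positivity)]
    nlinarith
  have hmem : ∀ x ∈ ball x₀ r, ∀ ζ : ℂ, ‖ζ‖ ≤ ρ → x + ζ • v ∈ ball x₀ (2 * r) := by
    intro x hx ζ hζ
    rw [mem_ball, dist_eq_norm] at *
    have : ‖ζ • v‖ ≤ ρ * ‖v‖ := by rw [norm_smul]; gcongr
    calc ‖x + ζ • v - x₀‖ = ‖(x - x₀) + ζ • v‖ := by congr 1; abel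
      _ ≤ ‖x - x₀‖ + ‖ζ • v‖ := norm_add_le _ _
      _ < 2 * r := by linarith
  have hsub : ball x₀ (2 * r) ⊆ U := (ball_subset_ball (by linarith)).trans hrU
  have hdiff : ∀ x ∈ ball x₀ (2 * r), DifferentiableAt ℂ f x := fun x hx =>
    hf.differentiableAt (hU.mem_nhds (hsub hx))
  have hbd : ∀ x ∈ ball x₀ (2 * r), ‖fderiv ℂ f x‖ ≤ 2 * M / r := by
    intro x hx
    have hb : ball x r ⊆ ball x₀ (3 * r) := ball_subset_ball' (by
      have := mem_ball.1 hx; linarith)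
    exact norm_fderiv_le_of_bounded hr (hf.mono (hb.trans hrU)) fun z hz => hM z (hb hz)
  -- integral formula
  have hform : ∀ x ∈ ball x₀ r, fderiv ℂ f x v =
      (2 * Real.pi * Complex.I : ℂ)⁻¹ • ∮ ζ in C(0, ρ), (1 / (ζ - 0) ^ 2) • f (x + ζ • v) := by
    intro x hx
    have hline : ∀ ζ : ℂ, HasFDerivAt (fun ζ : ℂ => x + ζ • v)
        ((ContinuousLinearMap.id ℂ ℂ).smulRight v) ζ := fun ζ =>
      ((ContinuousLinearMap.id ℂ ℂ).smulRight v).hasFDerivAt.const_add x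
    have hd : DifferentiableOn ℂ (fun ζ : ℂ => f (x + ζ • v)) (closedBall 0 ρ) := by
      intro ζ hζ
      have := hdiff _ (hmem x hx ζ (by simpa using hζ))
      exact (DifferentiableAt.comp ζ this (hline ζ).differentiableAt).differentiableWithinAt
    rw [hd.deriv_eq_smul_circleIntegral hρ, smul_smul, inv_mul_cancel₀ (by simp [Real.pi_ne_zero]),
      one_smul]
    have h0 := hdiff _ (hmem x hx 0 (by simpa using hρ.le))
    have h1 := (h0.hasFDerivAt.comp (0 : ℂ) (hline 0)).hasDerivAt.deriv
    have h2 : (f ∘ fun ζ : ℂ => x + ζ • v) = fun ζ : ℂ => f (x + ζ • v) := rfl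
    rw [h2] at h1
    rw [h1]
    simp
  have hev : (fun x => fderiv ℂ f x v) =ᶠ[𝓝 x₀] fun x =>
      (2 * Real.pi * Complex.I : ℂ)⁻¹ • ∮ ζ in C(0, ρ), (1 / (ζ - 0) ^ 2) • f (x + ζ • v) := by
    filter_upwards [ball_mem_nhds x₀ hr] with x hx using hform x hx
  refine DifferentiableAt.congr_of_eventuallyEq ?_ hev
  suffices hI : DifferentiableAt ℂ (fun x : Fin n → ℂ =>
      ∮ ζ in C(0, ρ), (1 / (ζ - 0) ^ 2) • f (x + ζ • v)) x₀ from
    hI.const_smul (2 * Real.pi * Complex.I : ℂ)⁻¹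
  simp only [circleIntegral]
  let c : ℝ → ℂ := fun θ => deriv (circleMap 0 ρ) θ * (1 / (circleMap 0 ρ θ - 0) ^ 2)
  have hcc : Continuous c := by
    have h0 : ∀ θ, (circleMap 0 ρ θ - 0) ^ 2 ≠ 0 := fun θ => by
      simp [hρ.ne']
    have h1 : Continuous (circleMap 0 ρ) := continuous_circleMap 0 ρ
    have h2 : Continuous (deriv (circleMap 0 ρ)) := by
      simp only [funext (deriv_circleMap 0 ρ)]
      exact h1.mul continuous_const
    exact h2.mul (continuous_const.div ((h1.sub continuous_const).pow 2) h0)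
  have hcirc : ∀ θ, ‖circleMap 0 ρ θ‖ ≤ ρ := fun θ => by simp [abs_of_pos hρ]
  have hFcont : ∀ x ∈ ball x₀ r, Continuous fun θ : ℝ =>
      deriv (circleMap 0 ρ) θ • (1 / (circleMap 0 ρ θ - 0) ^ 2) • f (x + circleMap 0 ρ θ • v) := by
    intro x hx
    have : Continuous fun θ : ℝ => f (x + circleMap 0 ρ θ • v) := by
      rw [continuous_iff_continuousAt]
      intro θ
      have h1 := (hdiff _ (hmem x hx _ (hcirc θ))).continuousAt
      have h2 : Continuous fun θ : ℝ => x + circleMap 0 ρ θ • v :=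
        continuous_const.add ((continuous_circleMap 0 ρ).smul continuous_const)
      exact ContinuousAt.comp (f := fun θ : ℝ => x + circleMap 0 ρ θ • v) h1 h2.continuousAt
    refine (hcc.mul this).congr fun θ => ?_
    simp only [c, smul_eq_mul, Pi.mul_apply]
    ring
  have key := intervalIntegral.hasFDerivAt_integral_of_dominated_of_fderiv_le (𝕜 := ℂ)
    (μ := MeasureTheory.volume) (a := 0) (b := 2 * Real.pi) (s := ball x₀ r) (x₀ := x₀)
    (F := fun x θ => deriv (circleMap 0 ρ) θ • (1 / (circleMap 0 ρ θ - 0) ^ 2) •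
      f (x + circleMap 0 ρ θ • v))
    (F' := fun x θ => c θ • fderiv ℂ f (x + circleMap 0 ρ θ • v))
    (bound := fun θ => ‖c θ‖ * (2 * M / r)) (ball_mem_nhds x₀ hr) ?_ ?_ ?_ ?_ ?_ ?_
  · exact key.differentiableAt
  · filter_upwards [ball_mem_nhds x₀ hr] with x hx using (hFcont x hx).aestronglyMeasurable
  · exact (hFcont x₀ (mem_ball_self hr)).intervalIntegrable _ _
  · have : ProperSpace ((Fin n → ℂ) →L[ℂ] ℂ) := FiniteDimensional.proper ℂ _
    have h2 : Continuous fun θ : ℝ => x₀ + circleMap 0 ρ θ • v :=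
      continuous_const.add ((continuous_circleMap 0 ρ).smul continuous_const)
    have h3 : Measurable fun θ : ℝ => fderiv ℂ f (x₀ + circleMap 0 ρ θ • v) :=
      (measurable_fderiv ℂ f).comp h2.measurable
    have h4 : MeasureTheory.StronglyMeasurable
        fun θ : ℝ => fderiv ℂ f (x₀ + circleMap 0 ρ θ • v) := h3.stronglyMeasurable
    exact (hcc.stronglyMeasurable.smul h4).aestronglyMeasurable
  · refine Eventually.of_forall fun θ _ x hx => ?_
    rw [norm_smul]
    gcongr
    exact hbd _ (hmem x hx _ (hcirc θ))
  · exact (hcc.norm.mul continuous_const).intervalIntegrable _ _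
  · refine Eventually.of_forall fun θ _ x hx => ?_
    have h1 := (hdiff _ (hmem x hx _ (hcirc θ))).hasFDerivAt
    have h2 : HasFDerivAt (fun x => f (x + circleMap 0 ρ θ • v))
        (fderiv ℂ f (x + circleMap 0 ρ θ • v)) x := by
      have := HasFDerivAt.comp x h1 ((hasFDerivAt_id x).add_const (circleMap 0 ρ θ • v))
      rw [ContinuousLinearMap.comp_id] at this
      exact this
    refine (h2.const_smul (c θ)).congr_of_eventuallyEq (Eventually.of_forall fun y => ?_)
    simp only [c, smul_eq_mul, mul_assoc, Pi.smul_apply]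

/-- Holomorphic functions are smooth. -/
lemma contDiffOn_of_holo {n : ℕ} {U : Set (Fin n → ℂ)} (hU : IsOpen U) (k : ℕ) :
    ∀ {f : (Fin n → ℂ) → ℂ}, DifferentiableOn ℂ f U → ContDiffOn ℂ k f U := by
  induction k with
  | zero => intro f hf; simpa using hf.continuousOn
  | succ k ih =>
    intro f hf
    push_cast
    rw [contDiffOn_succ_iff_fderiv_of_isOpen hU]
    refine ⟨hf, by simp, contDiffOn_clm_apply.2 fun v => ih (differentiableOn_fderiv_apply hU hf v)⟩

lemma differentiableAt_iteratedFDeriv_of_holo {n : ℕ} {U : Set (Fin n → ℂ)} (hU : IsOpen U)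
    {f : (Fin n → ℂ) → ℂ} (hf : DifferentiableOn ℂ f U) (k : ℕ) {x : Fin n → ℂ} (hx : x ∈ U) :
    DifferentiableAt ℂ (iteratedFDeriv ℂ k f) x :=
  ((contDiffOn_of_holo hU (k + 1) hf).contDiffAt
    (hU.mem_nhds hx)).differentiableAt_iteratedFDeriv (by exact_mod_cast k.lt_succ_self)

lemma norm_iteratedFDeriv_le_aux {n : ℕ} {U : Set (Fin n → ℂ)} (hU : IsOpen U)
    {f : (Fin n → ℂ) → ℂ} (hf : DifferentiableOn ℂ f U) {M d : ℝ} (hd : 0 < d)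
    {V : Set (Fin n → ℂ)} (hVU : V ⊆ U) (hM : ∀ x ∈ V, ‖f x‖ ≤ M) (m : ℕ) :
    ∀ y ∈ V, ball y (m * d) ⊆ V → ‖iteratedFDeriv ℂ m f y‖ ≤ M * (2 / d) ^ m := by
  induction m with
  | zero => intro y hy _; simpa using hM y hy
  | succ m ih =>
    intro y hy hb
    rw [← norm_fderiv_iteratedFDeriv]
    have hsub : ball y d ⊆ V := (ball_subset_ball (by
      push_cast; nlinarith [(Nat.cast_nonneg m : (0 : ℝ) ≤ m)])).trans hb
    refine (norm_fderiv_le_of_bounded hd (C := M * (2 / d) ^ m) ?_ ?_).trans (le_of_eq ?_)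
    · exact fun z hz => (differentiableAt_iteratedFDeriv_of_holo hU hf m
        (hVU (hsub hz))).differentiableWithinAt
    · intro z hz
      refine ih z (hsub hz) ((ball_subset_ball' ?_).trans hb)
      have := mem_ball.1 hz
      push_cast; linarith
    · rw [pow_succ]; ring

/-- Cauchy estimates. -/
lemma norm_iteratedFDeriv_le_holo {n : ℕ} {U : Set (Fin n → ℂ)} (hU : IsOpen U)
    {f : (Fin n → ℂ) → ℂ} (hf : DifferentiableOn ℂ f U) {M r : ℝ} (hr : 0 < r)
    {V : Set (Fin n → ℂ)} (hVU : V ⊆ U) (hM : ∀ x ∈ V, ‖f x‖ ≤ M) (m : ℕ)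
    {y : Fin n → ℂ} (hb : ball y r ⊆ V) :
    ‖iteratedFDeriv ℂ m f y‖ ≤ M * (m.factorial * (2 * Real.exp 1 / r) ^ m) := by
  have hy : y ∈ V := hb (mem_ball_self hr)
  have hM0 : 0 ≤ M := (norm_nonneg _).trans (hM y hy)
  rcases Nat.eq_zero_or_pos m with rfl | hm
  · simpa using hM y hy
  have hm' : (0 : ℝ) < m := by exact_mod_cast hm
  refine (norm_iteratedFDeriv_le_aux hU hf (d := r / m) (by positivity) hVU hM m y hy
    (by rwa [mul_div_cancel₀ _ hm'.ne'])).trans ?_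
  gcongr
  have h1 : (m : ℝ) ^ m / m.factorial ≤ Real.exp m := Real.pow_div_factorial_le_exp _ hm'.le m
  rw [div_le_iff₀ (by positivity)] at h1
  have h2 : Real.exp m = Real.exp 1 ^ m := by rw [← Real.exp_nat_mul, mul_one]
  have h3 : (2 / (r / m)) ^ m = (2 / r) ^ m * (m : ℝ) ^ m := by
    rw [← mul_pow]; congr 1; field_simp
  have h4 : (2 * Real.exp 1 / r) ^ m = (2 / r) ^ m * Real.exp 1 ^ m := by
    rw [← mul_pow]; congr 1; ring
  rw [h3, h4, ← h2]
  calc (2 / r) ^ m * (m : ℝ) ^ m ≤ (2 / r) ^ m * (Real.exp m * m.factorial) := by gcongr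
    _ = _ := by ring

lemma iteratedDeriv_line {n : ℕ} {U : Set (Fin n → ℂ)} (hU : IsOpen U)
    {f : (Fin n → ℂ) → ℂ} (hf : DifferentiableOn ℂ f U) (p v : Fin n → ℂ) (k : ℕ) :
    ∀ ζ : ℂ, p + ζ • v ∈ U → iteratedDeriv k (fun ζ : ℂ => f (p + ζ • v)) ζ =
      iteratedFDeriv ℂ k f (p + ζ • v) (fun _ => v) := by
  induction k with
  | zero => intro ζ _; simp
  | succ k ih =>
    intro ζ hζ
    have hcont : Continuous fun ζ : ℂ => p + ζ • v := by fun_prop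
    have hev : iteratedDeriv k (fun ζ : ℂ => f (p + ζ • v)) =ᶠ[𝓝 ζ]
        fun ζ => iteratedFDeriv ℂ k f (p + ζ • v) (fun _ => v) := by
      filter_upwards [(hU.preimage hcont).mem_nhds hζ] with w hw using ih w hw
    rw [iteratedDeriv_succ, hev.deriv_eq]
    have hd := differentiableAt_iteratedFDeriv_of_holo hU hf k hζ
    have hline : HasDerivAt (fun ζ : ℂ => p + ζ • v) v ζ := by
      simpa using ((hasDerivAt_id ζ).smul_const v).const_add p
    have h1 : HasDerivAt (fun ζ : ℂ => iteratedFDeriv ℂ k f (p + ζ • v))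
        (fderiv ℂ (iteratedFDeriv ℂ k f) (p + ζ • v) v) ζ :=
      HasFDerivAt.comp_hasDerivAt ζ hd.hasFDerivAt hline
    have h2 := ((ContinuousMultilinearMap.apply ℂ (fun _ : Fin k => (Fin n → ℂ)) ℂ
      (fun _ => v)).hasFDerivAt.comp_hasDerivAt ζ h1).deriv
    rw [iteratedFDeriv_succ_apply_left]
    exact h2

/-- If the derivatives of `f` at `p` satisfy Cauchy-type bounds, `f` extends to the ball. -/
lemma extends_of_bounds {n : ℕ} {U : Set (Fin n → ℂ)} (hU : IsOpen U)
    {f : (Fin n → ℂ) → ℂ} (hf : DifferentiableOn ℂ f U) {p a : Fin n → ℂ} (hp : p ∈ U)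
    {M s : ℝ} (hs : 0 < s)
    (hb : ∀ k : ℕ, ‖iteratedFDeriv ℂ k f p‖ ≤ M * (k.factorial * (1 / s) ^ k))
    (ha : a ∈ ball p s) : ExtendsHolomorphicallyTo U f a := by
  let q : FormalMultilinearSeries ℂ (Fin n → ℂ) ℂ :=
    fun k => (k.factorial : ℂ)⁻¹ • iteratedFDeriv ℂ k f p
  lift s to NNReal using hs.le
  have hrad : (s : ENNReal) ≤ q.radius := by
    refine q.le_radius_of_bound M fun k => ?_
    have hk : (0 : ℝ) < k.factorial := by positivity
    have : ‖q k‖ ≤ M * (1 / (s : ℝ)) ^ k := by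
      simp only [q, norm_smul, norm_inv, Complex.norm_natCast]
      rw [inv_mul_le_iff₀ hk]
      exact (hb k).trans (le_of_eq (by ring))
    calc ‖q k‖ * (s : ℝ) ^ k ≤ M * (1 / (s : ℝ)) ^ k * (s : ℝ) ^ k := by gcongr
      _ = M := by rw [mul_assoc, ← mul_pow, one_div_mul_cancel hs.ne', one_pow, mul_one]
  have hs0 : (0 : ENNReal) < s := by exact_mod_cast hs
  have hq := (q.hasFPowerSeriesOnBall (hs0.trans_le hrad)).mono hs0 hrad
  have hqd : DifferentiableOn ℂ q.sum (ball 0 s) := by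
    have := hq.differentiableOn
    rwa [Metric.eball_coe] at this
  obtain ⟨e, he, heU⟩ := Metric.isOpen_iff.1 hU p hp
  set e' := min e s with he'
  have he'0 : 0 < e' := lt_min he hs
  have hW : ball p (e' / 2) ⊆ ball p e' := ball_subset_ball (by linarith)
  refine ⟨ball p s, isOpen_ball, ?_, ha, fun y => q.sum (y - p), ?_, ball p (e' / 2),
    isOpen_ball, ⟨p, mem_ball_self (by linarith)⟩, ?_, ?_⟩
  · exact (convex_ball p (s : ℝ)).isConnected ⟨p, mem_ball_self hs⟩
  · refine hqd.comp (f := fun y => y - p) (by fun_prop) fun y hy => ?_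
    simpa [dist_eq_norm] using hy
  · exact hW.trans (subset_inter ((ball_subset_ball (min_le_left _ _)).trans heU)
      (ball_subset_ball (min_le_right _ _)))
  · intro y hy
    have hy' : ‖y - p‖ < e' / 2 := by simpa [dist_eq_norm] using hy
    have hin : ∀ ζ ∈ ball (0 : ℂ) 2, p + ζ • (y - p) ∈ U := by
      intro ζ hζ
      apply heU
      have hζ' : ‖ζ‖ < 2 := by simpa using hζ
      rw [mem_ball, dist_eq_norm, add_sub_cancel_left, norm_smul]
      have : ‖ζ‖ * ‖y - p‖ ≤ 2 * ‖y - p‖ := by gcongr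
      have := min_le_left e (s : ℝ)
      linarith
    have hh : DifferentiableOn ℂ (fun ζ : ℂ => f (p + ζ • (y - p))) (ball 0 2) :=
      hf.comp (f := fun ζ : ℂ => p + ζ • (y - p)) (by fun_prop) hin
    have h1 := Complex.hasSum_taylorSeries_on_ball hh (z := 1) (by simp)
    have h2 := hq.hasSum (y := y - p) (by
      rw [Metric.eball_coe, mem_ball_zero_iff]
      have := min_le_right e (s : ℝ)
      linarith)
    have h3 : (fun k : ℕ => (k.factorial : ℂ)⁻¹ • ((1 : ℂ) - 0) ^ k •
        iteratedDeriv k (fun ζ : ℂ => f (p + ζ • (y - p))) 0) =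
        fun k : ℕ => q k fun _ => y - p := by
      funext k
      rw [iteratedDeriv_line hU hf p (y - p) k 0 (hin 0 (by simp))]
      simp [q]
    rw [h3] at h1
    have := h1.unique h2
    simpa using this

/-- Every domain of holomorphy satisfies the continuity principle. -/
theorem isDomainOfHolomorphy_satisfiesContinuityPrinciple {n : ℕ} (U : Set (Fin n → ℂ))
    (h : IsDomainOfHolomorphy U) : SatisfiesContinuityPrinciple U := by
  obtain ⟨hU, -, f, hf, hext⟩ := h
  intro S hSc hSd hSU B T hB hBU hT hSB hST t ht
  by_contra htU
  refine hext t htU ?_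
  obtain ⟨δ, hδ, hδU⟩ := hB.exists_cthickening_subset_open hU hBU
  obtain ⟨M, hM⟩ := (hB.cthickening (r := δ)).exists_bound_of_continuousOn
    (hf.continuousOn.mono hδU)
  obtain ⟨J₁, hJ₁⟩ := hSB (δ / 2) (by positivity)
  have hs : 0 < (δ / 2) / (2 * Real.exp 1) := by positivity
  obtain ⟨J₂, hJ₂⟩ := hST _ hs
  let j := max J₁ J₂
  have hbdry := (hJ₁ j (le_max_left _ _)).1
  obtain ⟨p, ⟨z, hz, rfl⟩, hp⟩ := mem_thickening_iff.1 ((hJ₂ j (le_max_right _ _)).2 ht)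
  have hmaps : ∀ w ∈ closedBall (0 : ℂ) 1, S j w ∈ U := fun w hw => hSU j ⟨w, hw, rfl⟩
  refine extends_of_bounds hU hf (p := S j z) (hmaps z (ball_subset_closedBall hz)) hs
    (M := M) (fun k => ?_) (mem_ball.2 hp)
  have hdc : DiffContOnCl ℂ (fun w => iteratedFDeriv ℂ k f (S j w)) (ball 0 1) := by
    constructor
    · intro w hw
      have h1 := differentiableAt_iteratedFDeriv_of_holo hU hf k
        (hmaps w (ball_subset_closedBall hw))
      exact h1.comp_differentiableWithinAt w (hSd j w hw)
    · rw [closure_ball _ one_ne_zero]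
      intro w hw
      have h1 := differentiableAt_iteratedFDeriv_of_holo hU hf k (hmaps w hw)
      exact h1.continuousAt.comp_continuousWithinAt (hSc j w hw)
  refine Complex.norm_le_of_forall_mem_frontier_norm_le isBounded_ball hdc (fun w hw => ?_)
    (subset_closure hz)
  rw [frontier_ball _ one_ne_zero] at hw
  have hth := hbdry ⟨w, hw, rfl⟩
  have := norm_iteratedFDeriv_le_holo hU hf (M := M) (r := δ / 2) (by positivity) hδU hM k
    (y := S j w) (by
      obtain ⟨b, hb, hbw⟩ := mem_thickening_iff.1 hth
      intro x hx
      refine thickening_subset_cthickening _ _ (mem_thickening_iff.2 ⟨b, hb, ?_⟩)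
      have := dist_triangle x (S j w) b
      have := mem_ball.1 hx
      linarith)
  rwa [one_div_div]
end

section
/- Suppose n ≥ 2 and U ⊆ ℂⁿ is a domain such that the complement of U is nonempty and compact. Then U is not a domain of holomorphy. -/
open Set Metric Filter Topology

/-- Differentiation under the integral sign for a jointly continuous family of holomorphic
functions of several variables. -/
theorem differentiableOn_intervalIntegral_param {n : ℕ} {V : Set (Fin n → ℂ)} (hV : IsOpen V)
    {F : (Fin n → ℂ) → ℝ → ℂ} (hc : ContinuousOn (Function.uncurry F) (V ×ˢ univ))
    (hd : ∀ t, DifferentiableOn ℂ (fun z => F z t) V) (b : ℝ) :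
    DifferentiableOn ℂ (fun z => ∫ t in (0 : ℝ)..b, F z t) V := by
  intro x₀ hx₀
  apply DifferentiableAt.differentiableWithinAt
  obtain ⟨ε, hε, hball⟩ := Metric.isOpen_iff.1 hV x₀ hx₀
  obtain ⟨r, hr, hrε⟩ : ∃ r : ℝ, 0 < r ∧ 2 * r < ε := ⟨ε / 3, by positivity, by linarith⟩
  have hcb : closedBall x₀ (2 * r) ⊆ V := (closedBall_subset_ball hrε).trans hball
  have hslice : ∀ z ∈ V, Continuous (F z) := by
    intro z hz
    have h1 : Continuous (fun t : ℝ => (z, t)) := by fun_prop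
    have := hc.comp_continuous h1 (fun t => ⟨hz, mem_univ _⟩)
    exact this
  have hK : IsCompact (closedBall x₀ (2 * r) ×ˢ (uIcc 0 b)) :=
    (isCompact_closedBall _ _).prod isCompact_uIcc
  obtain ⟨C, hC⟩ := hK.exists_bound_of_continuousOn
    (hc.mono (prod_mono hcb (subset_univ _)))
  have hFd : ∀ t, ∀ x ∈ V, HasFDerivAt (fun z => F z t) (fderiv ℂ (fun z => F z t) x) x :=
    fun t x hx => ((hd t).differentiableAt (hV.mem_nhds hx)).hasFDerivAt
  have hmeas : MeasureTheory.StronglyMeasurable (fun t => fderiv ℂ (fun z => F z t) x₀) := by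
    have key : ∀ i : Fin n, MeasureTheory.StronglyMeasurable
        (fun t => fderiv ℂ (fun z => F z t) x₀ (Pi.single i 1)) := by
      intro i
      obtain ⟨N, hN⟩ := exists_nat_one_div_lt hr
      have hN' : (0 : ℝ) < N + 1 := by positivity
      have hcN : Tendsto (fun k : ℕ => ‖((k + N + 1 : ℕ) : ℂ)‖) atTop atTop := by
        simp only [Complex.norm_natCast]
        exact tendsto_natCast_atTop_atTop.comp
          (tendsto_atTop_mono (fun k => by simp only [id]; omega) tendsto_id)
      refine stronglyMeasurable_of_tendsto atTop (f := fun (k : ℕ) t =>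
        ((k + N + 1 : ℕ) : ℂ) • (F (x₀ + (((k + N + 1 : ℕ) : ℂ))⁻¹ • Pi.single i 1) t - F x₀ t))
        ?_ ?_
      · intro k
        apply Continuous.stronglyMeasurable
        have hmem : x₀ + (((k + N + 1 : ℕ) : ℂ))⁻¹ • Pi.single i 1 ∈ V := by
          apply hcb
          rw [mem_closedBall, dist_eq_norm, add_sub_cancel_left, norm_smul, norm_inv,
            Complex.norm_natCast, Pi.norm_single, norm_one, mul_one]
          have : ((k + N + 1 : ℕ) : ℝ)⁻¹ ≤ 1 / ((N : ℝ) + 1) := by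
            rw [one_div]
            apply inv_anti₀ hN'
            push_cast
            have : (0 : ℝ) ≤ k := by positivity
            linarith
          linarith
        have h1 := hslice _ hmem
        have h2 := hslice _ hx₀
        exact (h1.sub h2).const_smul ((k + N + 1 : ℕ) : ℂ)
      · rw [tendsto_pi_nhds]
        intro t
        exact (hFd t x₀ hx₀).lim (Pi.single i 1) hcN
    have heq : (fun t => fderiv ℂ (fun z => F z t) x₀) = fun t => ∑ i : Fin n,
        (fderiv ℂ (fun z => F z t) x₀ (Pi.single i 1)) •
          (ContinuousLinearMap.proj i : (Fin n → ℂ) →L[ℂ] ℂ) := by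
      funext t
      ext v
      conv_lhs => rw [pi_eq_sum_univ' v]
      simp [mul_comm]
    rw [heq]
    refine Finset.stronglyMeasurable_fun_sum _ (fun i _ => ?_)
    exact (key i).smul_const _
  refine (intervalIntegral.hasFDerivAt_integral_of_dominated_of_fderiv_le (𝕜 := ℂ)
    (F' := fun x t => fderiv ℂ (fun z => F z t) x) (bound := fun _ => 2 * C / r)
    (ball_mem_nhds x₀ hr) ?_ ?_ ?_ ?_ ?_ ?_).differentiableAt
  · filter_upwards [hV.mem_nhds hx₀] with z hz
    exact (hslice z hz).aestronglyMeasurable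
  · exact (hslice x₀ hx₀).intervalIntegrable _ _
  · exact hmeas.aestronglyMeasurable
  · refine Eventually.of_forall fun t ht x hx => ?_
    have hsub : ball x r ⊆ closedBall x₀ (2 * r) := by
      intro y hy
      rw [mem_ball] at hx hy
      rw [mem_closedBall]
      linarith [dist_triangle y x x₀]
    have hbd : ∀ y ∈ closedBall x₀ (2 * r), ‖F y t‖ ≤ C :=
      fun y hy => hC (y, t) ⟨hy, uIoc_subset_uIcc ht⟩
    refine Complex.norm_fderiv_le_div_of_mapsTo_ball
      ((hd t).mono (hsub.trans hcb)) (fun y hy => ?_) hr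
    rw [mem_closedBall, dist_eq_norm]
    have h1 := hbd y (hsub hy)
    have h2 := hbd x (hsub (mem_ball_self hr))
    linarith [norm_sub_le (F y t) (F x t)]
  · exact intervalIntegrable_const
  · refine Eventually.of_forall fun t _ x hx => hFd t x ?_
    exact hcb (closedBall_subset_closedBall (by linarith) (ball_subset_closedBall hx))

theorem differentiable_update_fst {n : ℕ} (i : Fin n) (w : ℂ) :
    Differentiable ℂ (fun z : Fin n → ℂ => Function.update z i w) := by
  rw [differentiable_pi]
  intro j
  by_cases h : j = i
  · subst h; simp
  · simp only [Function.update_of_ne h]; fun_prop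

theorem differentiable_update_snd {n : ℕ} (i : Fin n) (z : Fin n → ℂ) :
    Differentiable ℂ (fun w : ℂ => Function.update z i w) := by
  rw [differentiable_pi]
  intro j
  by_cases h : j = i
  · subst h; simp
  · simp only [Function.update_of_ne h]; fun_prop

/-- If `n ≥ 2` and `U ⊆ ℂⁿ` is a domain whose complement is nonempty and compact, then `U` is
not a domain of holomorphy. -/
theorem not_isDomainOfHolomorphy_of_compl_compact {n : ℕ} (hn : 2 ≤ n)
    (U : Set (Fin n → ℂ)) (hUo : IsOpen U) (hUc : IsConnected U)
    (hne : Uᶜ.Nonempty) (hcpt : IsCompact Uᶜ) :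
    ¬ IsDomainOfHolomorphy U := by
  rintro ⟨-, -, f, hf, hext⟩
  obtain ⟨a, ha⟩ := hne
  obtain ⟨R, hR, hKR⟩ := hcpt.isBounded.subset_ball_lt 0 0
  have hmemU : ∀ (z : Fin n → ℂ) (i : Fin n), R ≤ ‖z i‖ → z ∈ U := by
    intro z i hz
    by_contra h
    have := hKR h
    rw [mem_ball_zero_iff] at this
    linarith [norm_le_pi_norm z i]
  let i₀ : Fin n := ⟨0, by omega⟩
  let i₁ : Fin n := ⟨1, by omega⟩
  have hi : i₁ ≠ i₀ := by simp [i₀, i₁]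
  have hproj : ∀ i : Fin n, Continuous (fun z : Fin n → ℂ => z i) := fun i => continuous_apply i
  let V : Set (Fin n → ℂ) := {z | ‖z i₀‖ < R}
  have hVo : IsOpen V := isOpen_lt (hproj i₀).norm continuous_const
  have haV : a ∈ V := by
    by_contra h
    exact ha (hmemU a i₀ (not_lt.1 h))
  have hVc : Convex ℝ V := by
    have h1 : V = (LinearMap.proj i₀ : (Fin n → ℂ) →ₗ[ℝ] ℂ) ⁻¹' ball 0 R := by
      ext z; simp [V]
    rw [h1]
    exact (convex_ball _ _).linear_preimage _
  let g : (Fin n → ℂ) → ℂ := fun z =>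
    (2 * Real.pi * Complex.I : ℂ)⁻¹ •
      ∮ w in C(0, R), (w - z i₀)⁻¹ • f (Function.update z i₀ w)
  have hcircle : ∀ t : ℝ, ‖circleMap 0 R t‖ = R := by
    intro t; simp [abs_of_pos hR]
  have hupd : ∀ (z : Fin n → ℂ) (t : ℝ), Function.update z i₀ (circleMap 0 R t) ∈ U := by
    intro z t
    apply hmemU _ i₀
    rw [Function.update_self, hcircle]
  have hne0 : ∀ z ∈ V, ∀ t : ℝ, circleMap 0 R t - z i₀ ≠ 0 := by
    intro z hz t h
    have h2 : ‖z i₀‖ < R := hz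
    rw [← sub_eq_zero.1 h, hcircle] at h2
    exact lt_irrefl _ h2
  have hg : DifferentiableOn ℂ g V := by
    suffices h : DifferentiableOn ℂ (fun z : Fin n → ℂ =>
        ∮ w in C(0, R), (w - z i₀)⁻¹ • f (Function.update z i₀ w)) V from
      h.const_smul (2 * Real.pi * Complex.I : ℂ)⁻¹
    unfold circleIntegral
    refine differentiableOn_intervalIntegral_param hVo (F := fun z t =>
      deriv (circleMap 0 R) t • (circleMap 0 R t - z i₀)⁻¹ •
        f (Function.update z i₀ (circleMap 0 R t))) ?_ ?_ _
    · have hcm : Continuous (fun p : (Fin n → ℂ) × ℝ => circleMap 0 R p.2) :=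
        (continuous_circleMap 0 R).comp continuous_snd
      have e1 : Continuous (fun p : (Fin n → ℂ) × ℝ => deriv (circleMap 0 R) p.2) := by
        simp only [deriv_circleMap]
        exact hcm.mul continuous_const
      have e2 : ContinuousOn (fun p : (Fin n → ℂ) × ℝ => (circleMap 0 R p.2 - p.1 i₀)⁻¹)
          (V ×ˢ univ) :=
        (hcm.sub ((hproj i₀).comp continuous_fst)).continuousOn.inv₀
          (fun p hp => hne0 p.1 hp.1 p.2)
      have e3 : Continuous (fun p : (Fin n → ℂ) × ℝ =>
          f (Function.update p.1 i₀ (circleMap 0 R p.2))) :=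
        hf.continuousOn.comp_continuous (continuous_fst.update i₀ hcm) (fun p => hupd p.1 p.2)
      exact e1.continuousOn.smul (e2.smul e3.continuousOn)
    · intro t
      have e2 : DifferentiableOn ℂ (fun z : Fin n → ℂ => (circleMap 0 R t - z i₀)⁻¹) V := by
        apply DifferentiableOn.inv
        · fun_prop
        · exact fun z hz => hne0 z hz t
      have e3 : DifferentiableOn ℂ
          (fun z : Fin n → ℂ => f (Function.update z i₀ (circleMap 0 R t))) V :=
        hf.comp (differentiable_update_fst i₀ _).differentiableOn (fun z _ => hupd z t)
      exact (e2.smul e3).const_smul (deriv (circleMap 0 R) t)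
  refine hext a ha ⟨V, hVo, ⟨⟨a, haV⟩, hVc.isPreconnected⟩, haV, g, hg,
    {z | ‖z i₀‖ < R ∧ R < ‖z i₁‖}, ?_, ?_, ?_, ?_⟩
  · exact hVo.inter (isOpen_lt continuous_const (hproj i₁).norm)
  · refine ⟨Pi.single i₁ ((R + 1 : ℝ) : ℂ), ?_, ?_⟩
    · simpa [Pi.single_eq_of_ne hi.symm] using hR
    · rw [Pi.single_eq_same, Complex.norm_real, Real.norm_eq_abs]
      linarith [le_abs_self (R + 1)]
  · exact fun z hz => ⟨hmemU z i₁ hz.2.le, hz.1⟩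
  · intro z hz
    have hin : ∀ w : ℂ, Function.update z i₀ w ∈ U := by
      intro w
      apply hmemU _ i₁
      rw [Function.update_of_ne hi]
      exact hz.2.le
    have hD : Differentiable ℂ (fun w : ℂ => f (Function.update z i₀ w)) := fun w =>
      (hf.differentiableAt (hUo.mem_nhds (hin w))).comp w (differentiable_update_snd i₀ z w)
    have := hD.diffContOnCl.two_pi_i_inv_smul_circleIntegral_sub_inv_smul
      (c := 0) (R := R) (w := z i₀) (by simpa using hz.1)
    simp only [Function.update_eq_self] at this
    exact this.symm
end

section
/- Let {K_j}_{j≥1} be a sequence of compact sets in ℂⁿ such that K_j ⊆ int K_{j+1} and K_j is Runge in K_{j+1} for all j ≥ 1. Then K₁ is Runge in U := ⋃_{j≥1} int K_j. -/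
open Set Metric Filter Topology

/-- `A` is Runge in `B`: every function holomorphic on a neighbourhood of `A` can be approximated
uniformly on each compact subset of `A`, to within any `ε > 0`, by functions holomorphic on a
neighbourhood of `B`. -/
def RungeIn {n : ℕ} (A B : Set (Fin n → ℂ)) : Prop :=
  ∀ f : (Fin n → ℂ) → ℂ,
    (∃ W : Set (Fin n → ℂ), IsOpen W ∧ A ⊆ W ∧ DifferentiableOn ℂ f W) →
    ∀ K : Set (Fin n → ℂ), K ⊆ A → IsCompact K → ∀ ε : ℝ, 0 < ε →
      ∃ g : (Fin n → ℂ) → ℂ,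
        (∃ W' : Set (Fin n → ℂ), IsOpen W' ∧ B ⊆ W' ∧ DifferentiableOn ℂ g W') ∧
        ∀ z ∈ K, ‖f z - g z‖ < ε

/-- The telescoping series of a sequence of functions, differentiable on a ball and with
summably small differences there, is differentiable at the centre. -/
theorem differentiableAt_tsum_aux {n : ℕ} (d : ℕ → (Fin n → ℂ) → ℂ) (u : ℕ → ℝ)
    (hu : Summable u) (z : Fin n → ℂ) (r : ℝ) (hr : 0 < r)
    (hd : ∀ m, DifferentiableOn ℂ (d m) (ball z r))
    (hb : ∀ m, ∀ x ∈ ball z r, ‖d m x‖ ≤ u m) :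
    DifferentiableAt ℂ (fun x => ∑' m, d m x) z := by
  have hsub : ∀ x ∈ ball z (r / 2), ball x (r / 2) ⊆ ball z r := by
    intro x hx
    apply ball_subset_ball'
    have := mem_ball.1 hx
    linarith
  have hz : z ∈ ball z (r / 2) := mem_ball_self (by positivity)
  refine (hasFDerivAt_tsum_of_isPreconnected (u := fun m => (2 * u m) / (r / 2))
    (f := d) (f' := fun m x => fderiv ℂ (d m) x) (x₀ := z) (x := z)
    ((hu.mul_left 2).div_const _) isOpen_ball (convex_ball z (r / 2)).isPreconnected
    ?_ ?_ hz ?_ hz).differentiableAt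
  · intro m x hx
    have hx' : x ∈ ball z r := hsub x hx (mem_ball_self (by positivity))
    exact ((hd m).differentiableAt (isOpen_ball.mem_nhds hx')).hasFDerivAt
  · intro m x hx
    have hx' : x ∈ ball z r := hsub x hx (mem_ball_self (by positivity))
    refine Complex.norm_fderiv_le_div_of_mapsTo_ball ((hd m).mono (hsub x hx)) ?_ (by positivity)
    intro y hy
    rw [mem_closedBall, dist_eq_norm]
    have h1 := hb m y (hsub x hx hy)
    have h2 := hb m x hx'
    have h3 := norm_sub_le (d m y) (d m x)
    linarith
  · exact Summable.of_norm_bounded hu (fun m => hb m z (mem_ball_self hr))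

/-- If `{K_j}_{j ≥ 1}` is a sequence of compact sets in `ℂⁿ` with `K_j ⊆ int K_{j+1}` and `K_j`
Runge in `K_{j+1}` for all `j ≥ 1`, then `K₁` is Runge in `⋃_{j ≥ 1} int K_j`. -/
theorem runge_in_union {n : ℕ} (K : ℕ → Set (Fin n → ℂ))
    (hcpt : ∀ j, 1 ≤ j → IsCompact (K j))
    (hsub : ∀ j, 1 ≤ j → K j ⊆ interior (K (j + 1)))
    (hrunge : ∀ j, 1 ≤ j → RungeIn (K j) (K (j + 1))) :
    RungeIn (K 1) (⋃ j, ⋃ (_ : 1 ≤ j), interior (K j)) := by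
  intro f hf L hL _ ε hε
  have hint : ∀ j, 1 ≤ j → K j ⊆ K (j + 1) := fun j hj => (hsub j hj).trans interior_subset
  have hmono : ∀ i j, 1 ≤ i → i ≤ j → K i ⊆ K j := by
    intro i j hi hij
    induction j, hij using Nat.le_induction with
    | base => exact subset_rfl
    | succ k hk ih => exact ih.trans (hint k (hi.trans hk))
  let P : ℕ → ((Fin n → ℂ) → ℂ) → Prop := fun j h =>
    ∃ W : Set (Fin n → ℂ), IsOpen W ∧ K (j + 1) ⊆ W ∧ DifferentiableOn ℂ h W
  have step : ∀ j, ∀ h : {h // P j h}, ∃ g : {g // P (j + 1) g},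
      ∀ z ∈ K (j + 1), ‖h.1 z - g.1 z‖ < ε / 2 / 2 / 2 ^ j := by
    intro j h
    obtain ⟨g, hg, hgb⟩ := hrunge (j + 1) (by omega) h.1 h.2 (K (j + 1)) subset_rfl
      (hcpt _ (by omega)) (ε / 2 / 2 / 2 ^ j) (by positivity)
    exact ⟨⟨g, hg⟩, hgb⟩
  choose G hG using step
  let F : ∀ j, {h // P j h} := fun j => Nat.rec ⟨f, hf⟩ (fun j h => G j h) j
  have hF : ∀ j, ∀ z ∈ K (j + 1), ‖(F j).1 z - (F (j + 1)).1 z‖ < ε / 2 / 2 / 2 ^ j :=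
    fun j => hG j (F j)
  let u : ℕ → ℝ := fun j => ε / 2 / 2 / 2 ^ j
  have hu : Summable u := summable_geometric_two' (ε / 2)
  have hut : ∑' j, u j = ε / 2 := tsum_geometric_two' (ε / 2)
  let d : ℕ → (Fin n → ℂ) → ℂ := fun j z => (F (j + 1)).1 z - (F j).1 z
  have hd : ∀ J j, J ≤ j → ∀ z ∈ K (J + 1), ‖d j z‖ ≤ u j := by
    intro J j hJ z hz
    have := hF j z (hmono (J + 1) (j + 1) (by omega) (by omega) hz)
    rw [norm_sub_rev] at this
    exact this.le
  have hdiff : ∀ J j, J ≤ j → ∀ S, S ⊆ K (J + 1) → DifferentiableOn ℂ (F j).1 S := by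
    intro J j hJ S hS
    obtain ⟨W, _, hW, hWd⟩ := (F j).2
    exact hWd.mono (hS.trans ((hmono (J + 1) (j + 1) (by omega) (by omega)).trans hW))
  have hU : IsOpen (⋃ j, ⋃ (_ : 1 ≤ j), interior (K j)) :=
    isOpen_iUnion fun j => isOpen_iUnion fun _ => isOpen_interior
  refine ⟨fun z => f z + ∑' j, d j z, ⟨_, hU, subset_rfl, ?_⟩, ?_⟩
  · intro z hz
    apply DifferentiableAt.differentiableWithinAt
    simp only [mem_iUnion] at hz
    obtain ⟨j, hj, hz⟩ := hz
    obtain ⟨J, rfl⟩ : ∃ J, j = J + 1 := ⟨j - 1, by omega⟩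
    obtain ⟨r, hr, hball⟩ := Metric.isOpen_iff.1 isOpen_interior z hz
    have hball' : ball z r ⊆ K (J + 1) := hball.trans interior_subset
    have htail : DifferentiableAt ℂ (fun x => ∑' m, d (m + J) x) z := by
      refine differentiableAt_tsum_aux (fun m => d (m + J)) (fun m => u (m + J))
        ((summable_nat_add_iff J).2 hu) z r hr ?_ ?_
      · intro m
        exact (hdiff J (m + J + 1) (by omega) _ hball').sub
          (hdiff J (m + J) (by omega) _ hball')
      · intro m x hx
        exact hd J (m + J) (by omega) x (hball' hx)
    have hFJ : DifferentiableAt ℂ (F J).1 z :=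
      (hdiff J J le_rfl _ hball').differentiableAt (ball_mem_nhds z hr)
    refine (hFJ.add htail).congr_of_eventuallyEq ?_
    filter_upwards [ball_mem_nhds z hr] with x hx
    have hs : Summable (fun m => d (m + J) x) :=
      Summable.of_norm_bounded ((summable_nat_add_iff J).2 hu)
        (fun m => hd J (m + J) (by omega) x (hball' hx))
    have h1 := Summable.sum_add_tsum_nat_add' (f := fun m => d m x) (k := J) hs
    have h2 : ∑ i ∈ Finset.range J, d i x = (F J).1 x - f x :=
      Finset.sum_range_sub (fun i => (F i).1 x) J
    simp only [Pi.add_apply]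
    rw [← h1, h2]
    ring
  · intro z hz
    have hb : ‖∑' j, d j z‖ ≤ ε / 2 :=
      tsum_of_norm_bounded (hut ▸ hu.hasSum) (fun j => hd 0 j (by omega) z (hL hz))
    have : f z - (f z + ∑' j, d j z) = -∑' j, d j z := by ring
    rw [this, norm_neg]
    linarith
end
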